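/- arXiv:1605.02171 — 2 statements merged into one kernel-verified Lean document; each statement's English description precedes it below -/
import Mathlib

section
/- Let f = h + \overline{g} \in \mathcal{AK}_H with b_1 = g'(0) (so |b_1| < 1). Then the Jacobian J_f(z) = |h'(z)|^2 - |g'(z)|^2 satisfies, for every z \in \mathbb{D}, (1-|b_1|^2) (1-|z|)^{4/\sqrt{3} - 2} / (1+|z|)^{4/\sqrt{3} + 2} \leq J_f(z) \leq (1-|b_1|^2) (1+|z|)^{4/\sqrt{3} - 2} / (1-|z|)^{4/\sqrt{3} + 2}. -/
open Complex Metric ComplexConjugate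

noncomputable section

/-- Second-order test at a maximum. -/
lemma second_test {φ : ℝ → ℝ} {d : ℝ} (hmax : IsLocalMax φ 0) (hc : ContinuousAt φ 0)
    (hdd : HasDerivAt (deriv φ) d 0) : d ≤ 0 := by
  by_contra hd
  push Not at hd
  have h0 : deriv φ 0 = 0 := hmax.deriv_eq_zero
  have hmin := isLocalMin_of_deriv_deriv_pos (by rw [hdd.deriv]; exact hd) h0 hc
  have hconst : φ =ᶠ[nhds 0] fun _ => φ 0 := by
    filter_upwards [hmax, hmin] with x h1 h2
    exact le_antisymm h1 h2
  have h2 : deriv φ =ᶠ[nhds 0] fun _ => 0 := by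
    have := hconst.deriv
    filter_upwards [this] with x hx
    simpa using hx
  have := h2.deriv_eq
  rw [hdd.deriv] at this
  simp at this
  linarith

lemma crit {P : ℂ → ℂ} (hP : DifferentiableOn ℂ P (ball (0:ℂ) 1)) {a u : ℂ} {r : ℝ}
    (hr : 0 < r) (hu : ‖u‖ = 1) (har : r < 1 - ‖a‖)
    (hmax : ∀ w ∈ ball a r, (P w).re ≤ (P (a + r * u)).re) :
    ∃ m : ℝ, 0 ≤ m ∧ deriv P (a + r * u) = m * conj u ∧
      -r * (deriv (deriv P) (a + r * u) * u ^ 2).re ≤ m := by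
  have hsub : closedBall a r ⊆ ball (0:ℂ) 1 := by
    intro w hw
    rw [mem_closedBall, dist_eq_norm] at hw
    rw [mem_ball, dist_zero_right]
    have : ‖w‖ ≤ ‖w - a‖ + ‖a‖ := by simpa using norm_add_le (w - a) a
    linarith
  have hmax' : ∀ w ∈ closedBall a r, (P w).re ≤ (P (a + r * u)).re := by
    intro w hw
    have hcl : closure (ball a r) = closedBall a r := closure_ball a hr.ne'
    refine le_on_closure (f := fun w => (P w).re) (g := fun _ => (P (a + r * u)).re) hmax ?_
      continuousOn_const (by rw [hcl]; exact hw)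
    rw [hcl]
    exact Complex.continuous_re.comp_continuousOn (hP.continuousOn.mono hsub)
  have hmem : ∀ t : ℝ, a + r * u * Complex.exp (I * t) ∈ closedBall a r := by
    intro t
    rw [mem_closedBall, dist_eq_norm]
    rw [mul_comm I]
    simp [hu, Complex.norm_exp_ofReal_mul_I, abs_of_pos hr]
  have hz : a + r * u ∈ closedBall a r := by simpa using hmem 0
  have hd : ∀ w ∈ closedBall a r, HasDerivAt P (deriv P w) w := fun w hw =>
    ((hP w (hsub hw)).differentiableAt (isOpen_ball.mem_nhds (hsub hw))).hasDerivAt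
  have hd2 : ∀ w ∈ closedBall a r, HasDerivAt (deriv P) (deriv (deriv P) w) w := fun w hw =>
    (((hP.deriv isOpen_ball) w (hsub hw)).differentiableAt
      (isOpen_ball.mem_nhds (hsub hw))).hasDerivAt
  have hcurve : ∀ w : ℂ, HasDerivAt (fun w => a + r * u * Complex.exp (I * w))
      (r * u * I * Complex.exp (I * w)) w := by
    intro w
    have h1 : HasDerivAt (fun w : ℂ => I * w) I w := by
      simpa using (hasDerivAt_id w).const_mul I
    have := (h1.cexp.const_mul (r * u)).const_add a
    exact this.congr_deriv (by ring)
  set φ : ℝ → ℝ := fun t => (P (a + r * u * Complex.exp (I * t))).re with hφ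
  have hφd : ∀ t : ℝ, HasDerivAt φ
      (deriv P (a + r * u * Complex.exp (I * t)) * (r * u * I * Complex.exp (I * t))).re t := by
    intro t
    exact (HasDerivAt.comp_of_eq (t : ℂ) (hd _ (hmem t)) (hcurve t) rfl).real_of_complex
  have hφ' : deriv φ = fun t : ℝ =>
      (deriv P (a + r * u * Complex.exp (I * t)) * (r * u * I * Complex.exp (I * t))).re :=
    funext fun t => (hφd t).deriv
  have hφmax : IsLocalMax φ 0 := by
    refine Filter.Eventually.of_forall fun t => ?_
    simpa [hφ] using hmax' _ (hmem t)
  have hfirst := hφmax.hasDerivAt_eq_zero (hφd 0)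
  have hdd : HasDerivAt (deriv φ) (deriv (deriv P) (a + r * u) * (r * u * I) * (r * u * I)
      + deriv P (a + r * u) * (r * u * I * I)).re 0 := by
    rw [hφ']
    have e1 : HasDerivAt (fun w : ℂ => deriv P (a + r * u * Complex.exp (I * w)))
        (deriv (deriv P) (a + r * u) * (r * u * I)) ((0:ℝ):ℂ) := by
      have := HasDerivAt.comp_of_eq (((0:ℝ):ℂ)) (hd2 _ hz) (hcurve ((0:ℝ):ℂ)) (by simp)
      simpa [Function.comp_def] using this
    have e2 : HasDerivAt (fun w : ℂ => r * u * I * Complex.exp (I * w))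
        (r * u * I * I) ((0:ℝ):ℂ) := by
      have h1 : HasDerivAt (fun w : ℂ => I * w) I ((0:ℝ):ℂ) := by
        simpa using (hasDerivAt_id ((0:ℝ):ℂ)).const_mul I
      have := (h1.cexp.const_mul (r * u * I))
      simpa using this
    have := (e1.mul e2).real_of_complex
    simpa using this
  have hsecond := second_test hφmax (hφd 0).continuousAt hdd
  have hrad : 0 ≤ (deriv P (a + r * u) * u).re := by
    have e1 : HasDerivAt (fun w : ℂ => P (a + r * u - w * u))
        (deriv P (a + r * u) * (-u)) ((0:ℝ):ℂ) := by
      have h1 : HasDerivAt (fun w : ℂ => a + r * u - w * u) (-u) ((0:ℝ):ℂ) := by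
        simpa using ((hasDerivAt_id ((0:ℝ):ℂ)).mul_const u).const_sub (a + r * u)
      exact HasDerivAt.comp_of_eq (((0:ℝ):ℂ)) (hd _ hz) h1 (by simp)
    have e2 := e1.real_of_complex.hasDerivWithinAt (s := Set.Icc 0 r)
    have hm : IsLocalMaxOn (fun x : ℝ => (P (a + r * u - x * u)).re) (Set.Icc 0 r) 0 := by
      apply IsMaxOn.localize
      intro x hx
      simp only [Set.mem_ofPred_eq, ofReal_zero, zero_mul, sub_zero]
      apply hmax'
      rw [mem_closedBall, dist_eq_norm]
      have : a + r * u - x * u - a = ((r - x : ℝ) : ℂ) * u := by push_cast; ring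
      rw [this, norm_mul, hu, Complex.norm_real, Real.norm_eq_abs, abs_of_nonneg (by linarith [hx.2])]
      linarith [hx.1]
    have hy : r ∈ posTangentConeAt (Set.Icc 0 r) (0:ℝ) := by
      apply mem_posTangentConeAt_of_segment_subset
      rw [zero_add, segment_eq_Icc hr.le]
    have := hm.hasFDerivWithinAt_nonpos e2.hasFDerivWithinAt hy
    simp at this ⊢
    have := nonneg_of_mul_nonneg_right (show 0 ≤ r * ((deriv P (a + r * u)).re * u.re - (deriv P (a + r * u)).im * u.im) by linarith) hr
    linarith
  have him : (deriv P (a + r * u) * u).im = 0 := by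
    have : (r : ℝ) * (deriv P (a + r * u) * u).im = 0 := by
      have h := hfirst
      simp at h ⊢
      rcases hr.ne' with _
      right
      have h3 : r * ((deriv P (a + r * u)).re * u.im + (deriv P (a + r * u)).im * u.re) = 0 := by
        linarith
      exact (mul_eq_zero.1 h3).resolve_left hr.ne'
    exact (mul_eq_zero.1 this).resolve_left hr.ne'
  have huu : u * conj u = 1 := by rw [mul_conj, normSq_eq_norm_sq, hu]; simp
  have hm : deriv P (a + r * u) * u = ((deriv P (a + r * u) * u).re : ℂ) := by
    apply Complex.ext <;> simp [him]
  refine ⟨(deriv P (a + r * u) * u).re, hrad, ?_, ?_⟩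
  · rw [← hm, mul_assoc, huu, mul_one]
  · have h4 : (deriv (deriv P) (a + r * u) * (r * u * I) * (r * u * I)
      + deriv P (a + r * u) * (r * u * I * I)) = 
      ((r:ℝ) : ℂ) * (-((r:ℝ) : ℂ) * (deriv (deriv P) (a + r * u) * u^2) - deriv P (a + r * u) * u) := by
      linear_combination (r * u * r * u * deriv (deriv P) (a + r * u) + deriv P (a + r * u) * r * u) * I_mul_I
    rw [h4, re_ofReal_mul] at hsecond
    have h5 : (-((r:ℝ) : ℂ) * (deriv (deriv P) (a + r * u) * u^2) - deriv P (a + r * u) * u).re ≤ 0 := by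
      by_contra h6
      push Not at h6
      have := mul_pos hr h6
      linarith
    rw [sub_re, ← ofReal_neg, re_ofReal_mul] at h5
    linarith

/-- The harmonic function with analytic parts `h`, `g`. -/
def harm (h g : ℂ → ℂ) : ℂ → ℂ := fun z => h z + conj (g z)

lemma fun_rep (l : StrongDual ℝ ℂ) : ∃ c : ℂ, ∀ v, l v = (conj c * v).re := by
  refine ⟨⟨l 1, l I⟩, fun v => ?_⟩
  have : v = v.re • (1:ℂ) + v.im • I := by
    simp [Complex.re_add_im]
  conv_lhs => rw [this]
  rw [map_add, map_smul, map_smul]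
  simp
  ring

lemma rep_harm (h g : ℂ → ℂ) (c w : ℂ) :
    (conj c * harm h g w).re = (conj c * h w + c * g w).re := by
  simp [harm]
  ring

lemma harm_strict {h g : ℂ → ℂ} (hh : DifferentiableOn ℂ h (ball (0:ℂ) 1))
    (hg : DifferentiableOn ℂ g (ball (0:ℂ) 1)) {z : ℂ} (hz : z ∈ ball (0:ℂ) 1)
    (hsp : ‖deriv g z‖ < ‖deriv h z‖) :
    ∃ L : ℂ ≃L[ℝ] ℂ, HasStrictFDerivAt (harm h g) (L : ℂ →L[ℝ] ℂ) z := by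
  have h1 := (hh.analyticAt (isOpen_ball.mem_nhds hz)).hasStrictDerivAt.complexToReal_fderiv
  have g1 := (hg.analyticAt (isOpen_ball.mem_nhds hz)).hasStrictDerivAt.complexToReal_fderiv
  have g2 := (conjCLE.toContinuousLinearMap.hasStrictFDerivAt (x := g z)).comp z g1
  have hf := h1.add g2
  set T := (deriv h z • (1 : ℂ →L[ℝ] ℂ) +
    conjCLE.toContinuousLinearMap.comp (deriv g z • (1 : ℂ →L[ℝ] ℂ))) with hT
  have hTv : ∀ v, T v = deriv h z * v + conj (deriv g z * v) := by
    intro v; simp [hT]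
  have hinj : Function.Injective T.toLinearMap := by
    rw [← LinearMap.ker_eq_bot, LinearMap.ker_eq_bot']
    intro v hv
    have hv' : deriv h z * v + conj (deriv g z * v) = 0 := by rw [← hTv]; exact hv
    have h3 : ‖deriv h z * v‖ = ‖deriv g z * v‖ := by
      rw [eq_neg_of_add_eq_zero_left hv', norm_neg, RCLike.norm_conj]
    rw [norm_mul, norm_mul] at h3
    by_contra hne
    have : 0 < ‖v‖ := norm_pos_iff.2 hne
    nlinarith
  refine ⟨(LinearEquiv.ofInjectiveEndo T.toLinearMap hinj).toContinuousLinearEquiv, ?_⟩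
  have hE : ((LinearEquiv.ofInjectiveEndo T.toLinearMap hinj).toContinuousLinearEquiv :
      ℂ →L[ℝ] ℂ) = T := by
    apply ContinuousLinearMap.ext
    intro v
    rfl
  rw [hE]
  exact hf

lemma harm_open {h g : ℂ → ℂ} (hh : DifferentiableOn ℂ h (ball (0:ℂ) 1))
    (hg : DifferentiableOn ℂ g (ball (0:ℂ) 1))
    (hsp : ∀ z ∈ ball (0:ℂ) 1, ‖deriv g z‖ < ‖deriv h z‖) {U : Set ℂ} (hU : IsOpen U)
    (hU1 : U ⊆ ball (0:ℂ) 1) : IsOpen (harm h g '' U) := by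
  rw [isOpen_iff_mem_nhds]
  rintro _ ⟨z, hz, rfl⟩
  obtain ⟨L, hL⟩ := harm_strict hh hg (hU1 hz) (hsp z (hU1 hz))
  rw [← hL.map_nhds_eq_of_equiv]
  exact Filter.image_mem_map (hU.mem_nhds hz)

lemma harm_cont {h g : ℂ → ℂ} (hh : DifferentiableOn ℂ h (ball (0:ℂ) 1))
    (hg : DifferentiableOn ℂ g (ball (0:ℂ) 1)) : ContinuousOn (harm h g) (ball (0:ℂ) 1) :=
  hh.continuousOn.add (Complex.continuous_conj.comp_continuousOn hg.continuousOn)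

lemma harm_locinj {h g : ℂ → ℂ} (hh : DifferentiableOn ℂ h (ball (0:ℂ) 1))
    (hg : DifferentiableOn ℂ g (ball (0:ℂ) 1)) {z : ℂ} (hz : z ∈ ball (0:ℂ) 1)
    (hsp : ‖deriv g z‖ < ‖deriv h z‖) : ∃ U ∈ nhds z, Set.InjOn (harm h g) U := by
  obtain ⟨L, hL⟩ := harm_strict hh hg hz hsp
  refine ⟨(hL.toOpenPartialHomeomorph (harm h g)).source,
    (hL.toOpenPartialHomeomorph (harm h g)).open_source.mem_nhds
      hL.mem_toOpenPartialHomeomorph_source, ?_⟩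
  have := (hL.toOpenPartialHomeomorph (harm h g)).injOn
  rwa [hL.toOpenPartialHomeomorph_coe] at this

lemma conv_sub {a : ℂ} {r : ℝ} (har : r < 1 - ‖a‖) : closedBall a r ⊆ ball (0:ℂ) 1 := by
  intro w hw
  rw [mem_closedBall, dist_eq_norm] at hw
  rw [mem_ball, dist_zero_right]
  have : ‖w‖ ≤ ‖w - a‖ + ‖a‖ := by simpa using norm_add_le (w - a) a
  linarith

lemma support {h g : ℂ → ℂ} (hh : DifferentiableOn ℂ h (ball (0:ℂ) 1))
    (hg : DifferentiableOn ℂ g (ball (0:ℂ) 1))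
    (hsp : ∀ z ∈ ball (0:ℂ) 1, ‖deriv g z‖ < ‖deriv h z‖)
    {a u c z : ℂ} {r : ℝ} (hr : 0 < r) (hu : ‖u‖ = 1) (har : r < 1 - ‖a‖) (hz : a + r * u = z)
    (hc : c ≠ 0)
    (hmax : ∀ w ∈ ball a r, (conj c * harm h g w).re ≤ (conj c * harm h g z).re) :
    ∃ m : ℝ, 0 < m ∧
      c * ((‖deriv h z‖ ^ 2 - ‖deriv g z‖ ^ 2 : ℝ) : ℂ) =
        m * (u * deriv h z - conj u * conj (deriv g z)) ∧
      -r * ((conj c * deriv (deriv h) z + c * deriv (deriv g) z) * u ^ 2).re ≤ m := by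
  subst hz
  have hzb : a + r * u ∈ ball (0:ℂ) 1 := by
    apply conv_sub har
    simp [hu, abs_of_pos hr]
  simp only [rep_harm] at hmax
  have hP : DifferentiableOn ℂ (fun w => conj c * h w + c * g w) (ball (0:ℂ) 1) :=
    (hh.const_mul _).add (hg.const_mul _)
  obtain ⟨m, hm0, hm1, hm2⟩ := crit hP hr hu har hmax
  have hd : ∀ {k : ℂ → ℂ}, DifferentiableOn ℂ k (ball (0:ℂ) 1) → ∀ w ∈ ball (0:ℂ) 1,
      HasDerivAt k (deriv k w) w := fun hk w hw =>
    ((hk w hw).differentiableAt (isOpen_ball.mem_nhds hw)).hasDerivAt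
  have e1 : ∀ w ∈ ball (0:ℂ) 1, deriv (fun w => conj c * h w + c * g w) w =
      conj c * deriv h w + c * deriv g w := fun w hw =>
    (((hd hh w hw).const_mul _).add ((hd hg w hw).const_mul _)).deriv
  have e2 : deriv (deriv (fun w => conj c * h w + c * g w)) (a + r * u) =
      conj c * deriv (deriv h) (a + r * u) + c * deriv (deriv g) (a + r * u) := by
    have : deriv (fun w => conj c * h w + c * g w) =ᶠ[nhds (a + r * u)]
        fun w => conj c * deriv h w + c * deriv g w := by
      filter_upwards [isOpen_ball.mem_nhds hzb] with w hw using e1 w hw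
    rw [this.deriv_eq]
    exact (((hd (hh.deriv isOpen_ball) _ hzb).const_mul _).add
      ((hd (hg.deriv isOpen_ball) _ hzb).const_mul _)).deriv
  rw [e1 _ hzb] at hm1
  rw [e2] at hm2
  have hsz := hsp _ hzb
  generalize deriv h (a + r * u) = H at *
  generalize deriv g (a + r * u) = G at *
  refine ⟨m, lt_of_le_of_ne hm0 ?_, ?_, hm2⟩
  · rintro rfl
    rw [ofReal_zero, zero_mul] at hm1
    have h3 : ‖conj c * H‖ = ‖c * G‖ := by
      rw [eq_neg_of_add_eq_zero_left hm1, norm_neg]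
    rw [norm_mul, norm_mul, RCLike.norm_conj] at h3
    have : 0 < ‖c‖ := norm_pos_iff.2 hc
    nlinarith
  · have h2 := congrArg conj hm1
    simp only [map_add, map_mul, conj_conj, conj_ofReal] at h2
    have n1 := mul_conj' H
    have n2 := mul_conj' G
    push_cast
    rw [← n1, ← n2]
    linear_combination H * h2 - conj G * hm1

/-- Main supporting functional at a boundary point not attained inside. -/
lemma exists_support {h g : ℂ → ℂ} (hh : DifferentiableOn ℂ h (ball (0:ℂ) 1))
    (hg : DifferentiableOn ℂ g (ball (0:ℂ) 1))
    (hsp : ∀ z ∈ ball (0:ℂ) 1, ‖deriv g z‖ < ‖deriv h z‖)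
    (hconv : ∀ a ∈ ball (0:ℂ) 1, ∀ r : ℝ, 0 < r → r < 1 - ‖a‖ →
        Convex ℝ (harm h g '' ball a r))
    {a p : ℂ} {r : ℝ} (hr : 0 < r) (har : r < 1 - ‖a‖) (hp : p ∉ harm h g '' ball a r) :
    ∃ c : ℂ, c ≠ 0 ∧ ∀ w ∈ ball a r, (conj c * harm h g w).re < (conj c * p).re := by
  have ha : a ∈ ball (0:ℂ) 1 := by
    rw [mem_ball, dist_zero_right]; linarith
  obtain ⟨l, hl⟩ := geometric_hahn_banach_open_point (hconv a ha r hr har)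
    (harm_open hh hg hsp isOpen_ball (ball_subset_closedBall.trans (conv_sub har))) hp
  obtain ⟨c, hc⟩ := fun_rep l
  have hw : ∀ w ∈ ball a r, (conj c * harm h g w).re < (conj c * p).re := by
    intro w hw
    rw [← hc, ← hc]
    exact hl _ ⟨w, hw, rfl⟩
  refine ⟨c, ?_, hw⟩
  rintro rfl
  simpa using hw a (mem_ball_self hr)

lemma collision_inside {h g : ℂ → ℂ} (hh : DifferentiableOn ℂ h (ball (0:ℂ) 1))
    (hg : DifferentiableOn ℂ g (ball (0:ℂ) 1))
    (hsp : ∀ z ∈ ball (0:ℂ) 1, ‖deriv g z‖ < ‖deriv h z‖)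
    {r : ℝ} (hr : 0 < r) (hr1 : r < 1) (hinj : Set.InjOn (harm h g) (ball 0 r))
    {x w : ℂ} (hx : x ∈ ball (0:ℂ) r) (hw : w ∈ closedBall (0:ℂ) r) (hxw : x ≠ w)
    (heq : harm h g x = harm h g w) : False := by
  have hsub : closedBall (0:ℂ) r ⊆ ball (0:ℂ) 1 := conv_sub (by simpa using hr1)
  obtain ⟨U, V, hU, hV, hxU, hwV, hUV⟩ := t2_separation hxw
  have hopen := harm_open hh hg hsp (hU.inter isOpen_ball)
    ((Set.inter_subset_right (s := U) (t := ball (0:ℂ) r)).trans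
      (ball_subset_closedBall.trans hsub))
  have hmem : harm h g w ∈ harm h g '' (U ∩ ball (0:ℂ) r) := ⟨x, ⟨hxU, hx⟩, heq⟩
  have hcw : ContinuousAt (harm h g) w :=
    (harm_cont hh hg).continuousAt (isOpen_ball.mem_nhds (hsub hw))
  have hW : V ∩ harm h g ⁻¹' (harm h g '' (U ∩ ball (0:ℂ) r)) ∈ nhds w :=
    Filter.inter_mem (hV.mem_nhds hwV) (hcw (hopen.mem_nhds hmem))
  rw [← closure_ball (0:ℂ) hr.ne'] at hw
  obtain ⟨w', ⟨hw'V, x', ⟨hx'U, hx'b⟩, hx'⟩, hw'b⟩ := mem_closure_iff_nhds.1 hw _ hW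
  have := hinj hx'b hw'b hx'
  subst this
  exact Set.disjoint_left.1 hUV hx'U hw'V

lemma bnd {h g : ℂ → ℂ} (hh : DifferentiableOn ℂ h (ball (0:ℂ) 1))
    (hg : DifferentiableOn ℂ g (ball (0:ℂ) 1)) {a c x : ℂ} {r t : ℝ} (hr : 0 < r)
    (har : r < 1 - ‖a‖) (hb : ∀ w ∈ ball a r, (conj c * harm h g w).re ≤ t)
    (hx : x ∈ closedBall a r) : (conj c * harm h g x).re ≤ t := by
  rw [← closure_ball a hr.ne'] at hx
  refine le_on_closure (f := fun w => (conj c * harm h g w).re) (g := fun _ => t) hb ?_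
    continuousOn_const hx
  rw [closure_ball a hr.ne']
  exact Complex.continuous_re.comp_continuousOn
    (continuousOn_const.mul ((harm_cont hh hg).mono (conv_sub har)))

lemma no_collision {h g : ℂ → ℂ} (hh : DifferentiableOn ℂ h (ball (0:ℂ) 1))
    (hg : DifferentiableOn ℂ g (ball (0:ℂ) 1))
    (hsp : ∀ z ∈ ball (0:ℂ) 1, ‖deriv g z‖ < ‖deriv h z‖)
    (hconv : ∀ a ∈ ball (0:ℂ) 1, ∀ r : ℝ, 0 < r → r < 1 - ‖a‖ →
        Convex ℝ (harm h g '' ball a r))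
    {r : ℝ} (hr : 0 < r) (hr1 : r < 1) (hinj : Set.InjOn (harm h g) (ball 0 r))
    {z w : ℂ} (hz : z ∈ closedBall (0:ℂ) r) (hw : w ∈ closedBall (0:ℂ) r) (hzw : z ≠ w)
    (heq : harm h g z = harm h g w) : False := by
  have hsub : closedBall (0:ℂ) r ⊆ ball (0:ℂ) 1 := conv_sub (by simpa using hr1)
  by_cases hzb : z ∈ ball (0:ℂ) r
  · exact collision_inside hh hg hsp hr hr1 hinj hzb hw hzw heq
  by_cases hwb : w ∈ ball (0:ℂ) r
  · exact collision_inside hh hg hsp hr hr1 hinj hwb hz hzw.symm heq.symm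
  have hp : harm h g z ∉ harm h g '' ball 0 r := by
    rintro ⟨x, hx, hxz⟩
    refine collision_inside hh hg hsp hr hr1 hinj hx hz ?_ hxz
    rintro rfl
    exact hzb hx
  have hnz : ‖z‖ = r := by
    simp at hz hzb; linarith
  have hnw : ‖w‖ = r := by
    simp at hw hwb; linarith
  obtain ⟨c₀, hc₀, hs₀⟩ := exists_support hh hg hsp hconv hr (by simpa using hr1) hp
  have hdpos : 0 < ‖z - w‖ := norm_pos_iff.2 (sub_ne_zero.2 hzw)
  set s := min r (‖z - w‖ / 4) with hs
  have hspos : 0 < s := lt_min hr (by linarith)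
  have hsr : s ≤ r := min_le_left _ _
  have hs4 : 4 * s ≤ ‖z - w‖ := by
    have := min_le_right r (‖z - w‖ / 4)
    linarith
  have hrC : (r : ℂ) ≠ 0 := by exact_mod_cast hr.ne'
  have key : ∀ y : ℂ, ‖y‖ = r → ‖y / r‖ = 1 ∧ ‖y - s * (y / r)‖ = r - s ∧
      s < 1 - ‖y - s * (y / r)‖ ∧ ball (y - s * (y / r)) s ⊆ ball 0 r ∧
      (∀ x ∈ ball (y - s * (y / r)) s, ‖x - y‖ < 2 * s) ∧
      y ∈ closedBall (y - s * (y / r)) s := by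
    intro y hy
    have k1 : ‖y / r‖ = 1 := by
      rw [norm_div, hy, Complex.norm_real, Real.norm_eq_abs, abs_of_pos hr, div_self hr.ne']
    have k2 : ‖y - s * (y / r)‖ = r - s := by
      have : y - s * (y / r) = ((r - s : ℝ) : ℂ) * (y / r) := by
        push_cast; field_simp
      rw [this, norm_mul, k1, Complex.norm_real, Real.norm_eq_abs, abs_of_nonneg (by linarith),
        mul_one]
    have k3 : ‖(s:ℂ) * (y / r)‖ = s := by
      rw [norm_mul, k1, Complex.norm_real, Real.norm_eq_abs, abs_of_pos hspos, mul_one]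
    refine ⟨k1, k2, by linarith, ?_, ?_, ?_⟩
    · apply ball_subset_ball'
      rw [dist_zero_right, k2]; linarith
    · intro x hx
      rw [mem_ball, dist_eq_norm] at hx
      have : x - y = (x - (y - s * (y / r))) - s * (y / r) := by ring
      rw [this]
      have := norm_sub_le (x - (y - s * (y / r))) (s * (y / r))
      linarith
    · rw [mem_closedBall, dist_eq_norm]
      rw [sub_sub_cancel, k3]
  obtain ⟨z1, z2, z3, z4, z5, z6⟩ := key z hnz
  obtain ⟨w1, w2, w3, w4, w5, w6⟩ := key w hnw
  have hb : ∀ a : ℂ, s < 1 - ‖a‖ → a ∈ ball (0:ℂ) 1 := by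
    intro a ha
    rw [mem_ball, dist_zero_right]; linarith
  have hbs : ∀ a : ℂ, s < 1 - ‖a‖ → ball a s ⊆ ball (0:ℂ) 1 := fun a ha =>
    ball_subset_closedBall.trans (conv_sub ha)
  have hdisj : Disjoint (harm h g '' ball (z - s * (z / r)) s)
      (harm h g '' ball (w - s * (w / r)) s) := by
    rw [Set.disjoint_left]
    rintro _ ⟨x, hx, rfl⟩ ⟨y, hy, hxy⟩
    have := hinj (w4 hy) (z4 hx) hxy
    subst this
    have e1 := z5 _ hx
    have e2 := w5 _ hy
    have : z - w = (y - w) - (y - z) := by ring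
    have := norm_sub_le (y - w) (y - z)
    rw [show (y - w) - (y - z) = z - w by ring] at this
    linarith
  obtain ⟨l, t, hl1, hl2⟩ := geometric_hahn_banach_open_open
    (hconv _ (hb _ z3) s hspos z3) (harm_open hh hg hsp isOpen_ball (hbs _ z3))
    (hconv _ (hb _ w3) s hspos w3) (harm_open hh hg hsp isOpen_ball (hbs _ w3)) hdisj
  obtain ⟨c, hc⟩ := fun_rep l
  have f1 : ∀ x ∈ ball (z - s * (z / r)) s, (conj c * harm h g x).re ≤ t := fun x hx => by
    rw [← hc]; exact (hl1 _ ⟨x, hx, rfl⟩).le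
  have f2 : ∀ x ∈ ball (w - s * (w / r)) s, (conj (-c) * harm h g x).re ≤ -t := fun x hx => by
    rw [map_neg, neg_mul, neg_re, ← hc]; linarith [hl2 _ ⟨x, hx, rfl⟩]
  have hcne : c ≠ 0 := by
    rintro rfl
    have e1 := hl1 _ ⟨_, mem_ball_self hspos, rfl⟩
    have e2 := hl2 _ ⟨_, mem_ball_self hspos, rfl⟩
    rw [hc] at e1 e2
    simp at e1 e2
    linarith
  have p1 := bnd hh hg hspos z3 f1 z6
  have p2 := bnd hh hg hspos w3 f2 w6
  have p2' : t ≤ (conj c * harm h g w).re := by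
    rw [map_neg, neg_mul, neg_re] at p2; linarith
  have p1' : (conj (-c) * harm h g z).re ≥ -t := by
    rw [map_neg, neg_mul, neg_re]; linarith
  obtain ⟨m0, hm0, A0, -⟩ := support hh hg hsp hspos z1 z3 (sub_add_cancel z _) hc₀
    (fun x hx => (hs₀ x (z4 hx)).le)
  obtain ⟨m1, hm1, A1, -⟩ := support hh hg hsp hspos z1 z3 (sub_add_cancel z _) hcne
    (fun x hx => (f1 x hx).trans (by rw [heq]; exact p2'))
  obtain ⟨n0, hn0, B0, -⟩ := support hh hg hsp hspos w1 w3 (sub_add_cancel w _) hc₀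
    (fun x hx => (hs₀ x (w4 hx)).le.trans (by rw [heq]))
  obtain ⟨n1, hn1, B1, -⟩ := support hh hg hsp hspos w1 w3 (sub_add_cancel w _)
    (neg_ne_zero.2 hcne) (fun x hx => (f2 x hx).trans (by rw [← heq]; exact p1'))
  have hJ : ∀ y ∈ ball (0:ℂ) 1, ((‖deriv h y‖ ^ 2 - ‖deriv g y‖ ^ 2 : ℝ) : ℂ) ≠ 0 := by
    intro y hy
    have := hsp y hy
    have h0 := norm_nonneg (deriv g y)
    have : 0 < ‖deriv h y‖ ^ 2 - ‖deriv g y‖ ^ 2 := by nlinarith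
    exact_mod_cast this.ne'
  have J1 := hJ z (hsub hz)
  have J2 := hJ w (hsub hw)
  have C1 : c₀ * m1 = c * m0 := by
    apply mul_right_cancel₀ J1
    linear_combination m1 * A0 - m0 * A1
  have C2 : c₀ * n1 = -c * n0 := by
    apply mul_right_cancel₀ J2
    linear_combination n1 * B0 - n0 * B1
  have C3 : c * ((m0 * n1 + n0 * m1 : ℝ) : ℂ) = 0 := by
    push_cast
    linear_combination m1 * C2 - n1 * C1
  have : ((m0 * n1 + n0 * m1 : ℝ) : ℂ) ≠ 0 := by
    exact_mod_cast (by positivity : (0:ℝ) < m0 * n1 + n0 * m1).ne'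
  exact (mul_ne_zero hcne this) C3

lemma harm_inj {h g : ℂ → ℂ} (hh : DifferentiableOn ℂ h (ball (0:ℂ) 1))
    (hg : DifferentiableOn ℂ g (ball (0:ℂ) 1))
    (hsp : ∀ z ∈ ball (0:ℂ) 1, ‖deriv g z‖ < ‖deriv h z‖)
    (hconv : ∀ a ∈ ball (0:ℂ) 1, ∀ r : ℝ, 0 < r → r < 1 - ‖a‖ →
        Convex ℝ (harm h g '' ball a r)) : Set.InjOn (harm h g) (ball (0:ℂ) 1) := by
  intro z0 hz0 w0 hw0 heq0
  by_contra hne0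
  set R := max ‖z0‖ ‖w0‖ with hR
  have hR1 : R < 1 := by
    rw [mem_ball, dist_zero_right] at hz0 hw0
    exact max_lt hz0 hw0
  have hsub : closedBall (0:ℂ) R ⊆ ball (0:ℂ) 1 := conv_sub (by simpa using hR1)
  set CC := (closedBall (0:ℂ) R) ×ˢ (closedBall (0:ℂ) R) with hCC
  have hCCc : IsCompact CC := (isCompact_closedBall _ _).prod (isCompact_closedBall _ _)
  set K : Set (ℂ × ℂ) := {p | p ∈ CC ∧ harm h g p.1 = harm h g p.2 ∧ p.1 ≠ p.2} with hK
  have hcont : ContinuousOn (fun p : ℂ × ℂ => harm h g p.1 - harm h g p.2) CC := by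
    have hc := (harm_cont hh hg).mono hsub
    exact (hc.comp continuousOn_fst (fun p hp => hp.1)).sub
      (hc.comp continuousOn_snd (fun p hp => hp.2))
  have hcl := hcont.preimage_isClosed_of_isClosed hCCc.isClosed (isClosed_singleton (x := (0:ℂ)))
  have hKclosed : IsClosed K := by
    apply isClosed_of_closure_subset
    intro p hp
    have hp' := closure_minimal (fun q hq => ?_) hcl hp
    · refine ⟨hp'.1, sub_eq_zero.1 hp'.2, ?_⟩
      intro heq
      obtain ⟨U, hU, hUi⟩ := harm_locinj hh hg (hsub hp'.1.1) (hsp _ (hsub hp'.1.1))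
      have hUU : U ×ˢ U ∈ nhds p := prod_mem_nhds hU (by rw [← heq]; exact hU)
      obtain ⟨q, hqU, hqK⟩ := mem_closure_iff_nhds.1 hp _ hUU
      exact hqK.2.2 (hUi hqU.1 hqU.2 hqK.2.1)
    · exact ⟨hq.1, sub_eq_zero.2 hq.2.1⟩
  have hKc : IsCompact K := hCCc.of_isClosed_subset hKclosed (fun q hq => hq.1)
  have hKne : K.Nonempty := ⟨(z0, w0), ⟨by simp [hR], by simp [hR]⟩, heq0, hne0⟩
  obtain ⟨⟨z, w⟩, hzw, hmin⟩ := hKc.exists_isMinOn hKne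
    (f := fun p : ℂ × ℂ => max ‖p.1‖ ‖p.2‖) (by fun_prop)
  set r := max ‖z‖ ‖w‖ with hr
  have hz : ‖z‖ ≤ r := le_max_left _ _
  have hw : ‖w‖ ≤ r := le_max_right _ _
  have hrR : r ≤ R := by
    have h1 := hzw.1.1
    have h2 := hzw.1.2
    simp at h1 h2
    exact max_le h1 h2
  have hrpos : 0 < r := by
    by_contra hcon
    push Not at hcon
    have e1 : z = 0 := norm_le_zero_iff.1 (hz.trans hcon)
    have e2 : w = 0 := norm_le_zero_iff.1 (hw.trans hcon)
    exact hzw.2.2 (by simp [e1, e2])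
  have hinj : Set.InjOn (harm h g) (ball 0 r) := by
    intro x hx y hy hxy
    by_contra hne
    rw [mem_ball, dist_zero_right] at hx hy
    have hmem : (x, y) ∈ K := by
      refine ⟨⟨?_, ?_⟩, hxy, hne⟩ <;> simp <;> linarith
    have h1 : r ≤ max ‖x‖ ‖y‖ := hmin hmem
    exact absurd (max_lt hx hy) (not_lt.2 h1)
  exact no_collision hh hg hsp hconv hrpos (by linarith) hinj (by simpa using hz)
    (by simpa using hw) hzw.2.2 hzw.2.1

lemma key_r {h g : ℂ → ℂ} (hh : DifferentiableOn ℂ h (ball (0:ℂ) 1))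
    (hg : DifferentiableOn ℂ g (ball (0:ℂ) 1))
    (hsp : ∀ z ∈ ball (0:ℂ) 1, ‖deriv g z‖ < ‖deriv h z‖)
    (hconv : ∀ a ∈ ball (0:ℂ) 1, ∀ r : ℝ, 0 < r → r < 1 - ‖a‖ →
        Convex ℝ (harm h g '' ball a r))
    {z u : ℂ} (hz : z ∈ ball (0:ℂ) 1) (hu : ‖u‖ = 1) {r : ℝ} (hr : 0 < r)
    (hrz : 2 * r * (1 - (z * conj u).re) < 1 - ‖z‖ ^ 2) :
    -r * ((conj (deriv h z) * deriv (deriv h) z - conj (deriv g z) * deriv (deriv g) z) * u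
      + (deriv h z * deriv (deriv g) z - deriv g z * deriv (deriv h) z) * u ^ 3).re
      ≤ ‖deriv h z‖ ^ 2 - ‖deriv g z‖ ^ 2 := by
  have hz1 : ‖z‖ < 1 := by simpa using hz
  have hre : (z * conj u).re ≤ ‖z‖ := by
    refine (Complex.re_le_norm _).trans ?_
    rw [norm_mul, RCLike.norm_conj, hu, mul_one]
  have hr1 : r < 1 := by
    by_contra hcon
    push Not at hcon
    nlinarith [norm_nonneg z]
  have hna : ‖z - r * u‖ ^ 2 = ‖z‖ ^ 2 - 2 * r * (z * conj u).re + r ^ 2 := by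
    have hu2 : u.re * u.re + u.im * u.im = 1 := by
      rw [← normSq_apply, normSq_eq_norm_sq, hu]; norm_num
    rw [← normSq_eq_norm_sq, ← normSq_eq_norm_sq, normSq_apply, normSq_apply]
    simp
    linear_combination r ^ 2 * hu2
  have har : r < 1 - ‖z - r * u‖ := by
    have : ‖z - r * u‖ < 1 - r := by
      apply lt_of_pow_lt_pow_left₀ 2 (by linarith)
      rw [hna]; nlinarith
    linarith
  have hinj := harm_inj hh hg hsp hconv
  have hp : harm h g z ∉ harm h g '' ball (z - r * u) r := by
    rintro ⟨x, hx, hxz⟩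
    have := hinj (ball_subset_closedBall.trans (conv_sub har) hx) hz hxz
    subst this
    rw [mem_ball, dist_eq_norm] at hx
    simp [hu, abs_of_pos hr] at hx
  obtain ⟨c, hc, hs⟩ := exists_support hh hg hsp hconv hr har hp
  obtain ⟨m, hm, A, B⟩ := support hh hg hsp hr hu har (sub_add_cancel z _) hc
    (fun x hx => (hs x hx).le)
  have huu : u * conj u = 1 := by rw [mul_conj, normSq_eq_norm_sq, hu]; simp
  have A' := congrArg conj A
  simp only [map_sub, map_mul, conj_conj, conj_ofReal] at A'
  set J := ‖deriv h z‖ ^ 2 - ‖deriv g z‖ ^ 2 with hJ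
  have hJpos : 0 < J := by
    have := hsp z hz
    have h0 := norm_nonneg (deriv g z)
    rw [hJ]; nlinarith
  have hE : ((J : ℝ) : ℂ) * ((conj c * deriv (deriv h) z + c * deriv (deriv g) z) * u ^ 2) =
      ((m : ℝ) : ℂ) * ((conj (deriv h z) * deriv (deriv h) z - conj (deriv g z) * deriv (deriv g) z) * u
      + (deriv h z * deriv (deriv g) z - deriv g z * deriv (deriv h) z) * u ^ 3) := by
    linear_combination deriv (deriv h) z * u ^ 2 * A' + deriv (deriv g) z * u ^ 2 * A +
      m * u * (conj (deriv h z) * deriv (deriv h) z - conj (deriv g z) * deriv (deriv g) z) * huu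
  have hE' := congrArg re hE
  rw [re_ofReal_mul, re_ofReal_mul] at hE'
  have h1 := mul_le_mul_of_nonneg_left B hJpos.le
  refine le_of_mul_le_mul_left ?_ hm
  linear_combination h1 + r * hE'

lemma key_u {h g : ℂ → ℂ} (hh : DifferentiableOn ℂ h (ball (0:ℂ) 1))
    (hg : DifferentiableOn ℂ g (ball (0:ℂ) 1))
    (hsp : ∀ z ∈ ball (0:ℂ) 1, ‖deriv g z‖ < ‖deriv h z‖)
    (hconv : ∀ a ∈ ball (0:ℂ) 1, ∀ r : ℝ, 0 < r → r < 1 - ‖a‖ →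
        Convex ℝ (harm h g '' ball a r))
    {z u : ℂ} (hz : z ∈ ball (0:ℂ) 1) (hu : ‖u‖ = 1) :
    -(1 - ‖z‖ ^ 2) *
      ((conj (deriv h z) * deriv (deriv h) z - conj (deriv g z) * deriv (deriv g) z) * u
      + (deriv h z * deriv (deriv g) z - deriv g z * deriv (deriv h) z) * u ^ 3).re
      ≤ 2 * (1 - (z * conj u).re) * (‖deriv h z‖ ^ 2 - ‖deriv g z‖ ^ 2) := by
  have hk := fun (r : ℝ) (hr : 0 < r) => key_r hh hg hsp hconv hz hu (r := r) hr
  have hz1 : ‖z‖ < 1 := by simpa using hz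
  have hre : (z * conj u).re ≤ ‖z‖ := by
    refine (Complex.re_le_norm _).trans ?_
    rw [norm_mul, RCLike.norm_conj, hu, mul_one]
  have hJpos : 0 < ‖deriv h z‖ ^ 2 - ‖deriv g z‖ ^ 2 := by
    have := hsp z hz
    have h0 := norm_nonneg (deriv g z)
    nlinarith
  have hD : 0 < 1 - (z * conj u).re := by linarith
  have hq : 0 < 1 - ‖z‖ ^ 2 := by nlinarith [norm_nonneg z]
  generalize ((conj (deriv h z) * deriv (deriv h) z - conj (deriv g z) * deriv (deriv g) z) * u
      + (deriv h z * deriv (deriv g) z - deriv g z * deriv (deriv h) z) * u ^ 3).re = E at *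
  generalize ‖deriv h z‖ ^ 2 - ‖deriv g z‖ ^ 2 = J at *
  generalize 1 - (z * conj u).re = D at *
  generalize 1 - ‖z‖ ^ 2 = q at *
  by_contra hcon
  push Not at hcon
  have hE : 0 < -E := by
    by_contra h1
    push Not at h1
    nlinarith [mul_pos hD hJpos]
  have hlt : J / (-E) < q / (2 * D) := by
    rw [div_lt_div_iff₀ hE (by positivity)]
    linarith
  obtain ⟨r, hr1, hr2⟩ := exists_between hlt
  have hr : 0 < r := (div_pos hJpos hE).trans hr1
  rw [div_lt_iff₀ hE] at hr1
  rw [lt_div_iff₀ (by positivity)] at hr2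
  have := hk r hr (by linarith)
  linarith

lemma key_avg {h g : ℂ → ℂ} (hh : DifferentiableOn ℂ h (ball (0:ℂ) 1))
    (hg : DifferentiableOn ℂ g (ball (0:ℂ) 1))
    (hsp : ∀ z ∈ ball (0:ℂ) 1, ‖deriv g z‖ < ‖deriv h z‖)
    (hconv : ∀ a ∈ ball (0:ℂ) 1, ∀ r : ℝ, 0 < r → r < 1 - ‖a‖ →
        Convex ℝ (harm h g '' ball a r))
    {z u : ℂ} (hz : z ∈ ball (0:ℂ) 1) (hu : ‖u‖ = 1) :
    -(1 - ‖z‖ ^ 2) *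
      ((conj (deriv h z) * deriv (deriv h) z - conj (deriv g z) * deriv (deriv g) z) * u).re
      + 2 * (z * conj u).re * (‖deriv h z‖ ^ 2 - ‖deriv g z‖ ^ 2)
      ≤ 4 / Real.sqrt 3 * (‖deriv h z‖ ^ 2 - ‖deriv g z‖ ^ 2) := by
  have h3 : (Real.sqrt 3) ^ 2 = 3 := Real.sq_sqrt (by norm_num)
  have h3p : 0 < Real.sqrt 3 := by positivity
  set s := Real.sqrt 3 with hs
  have hsC : (s : ℂ) ^ 2 = 3 := by exact_mod_cast h3
  have n1 : ‖(s / 2 + I / 2 : ℂ)‖ = 1 := by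
    rw [← sq_eq_sq₀ (norm_nonneg _) zero_le_one, ← normSq_eq_norm_sq, normSq_apply]
    simp; nlinarith
  have n2 : ‖(s / 2 - I / 2 : ℂ)‖ = 1 := by
    rw [← sq_eq_sq₀ (norm_nonneg _) zero_le_one, ← normSq_eq_norm_sq, normSq_apply]
    simp; nlinarith
  have k1 := key_u hh hg hsp hconv hz (u := u * (s / 2 + I / 2)) (by rw [norm_mul, hu, n1, mul_one])
  have k2 := key_u hh hg hsp hconv hz (u := u * (s / 2 - I / 2)) (by rw [norm_mul, hu, n2, mul_one])
  generalize conj (deriv h z) * deriv (deriv h) z - conj (deriv g z) * deriv (deriv g) z = A at *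
  generalize deriv h z * deriv (deriv g) z - deriv g z * deriv (deriv h) z = B at *
  generalize ‖deriv h z‖ ^ 2 - ‖deriv g z‖ ^ 2 = J at *
  have e1 : (A * (u * (s / 2 + I / 2)) + B * (u * (s / 2 + I / 2)) ^ 3) +
      (A * (u * (s / 2 - I / 2)) + B * (u * (s / 2 - I / 2)) ^ 3) = (s : ℂ) * (A * u) := by
    linear_combination (B * u ^ 3 * s / 4) * hsC + (3 * B * u ^ 3 * s / 4) * I_sq
  have e2 : z * conj (u * (s / 2 + I / 2)) + z * conj (u * (s / 2 - I / 2)) =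
      (s : ℂ) * (z * conj u) := by
    simp only [map_mul, map_add, map_sub, map_div₀, conj_ofReal, conj_I, map_ofNat]
    ring
  have e1' := congrArg re e1
  have e2' := congrArg re e2
  rw [re_ofReal_mul, add_re] at e1' e2'
  rw [div_mul_eq_mul_div, le_div_iff₀ h3p]
  linear_combination k1 + k2 + (1 - ‖z‖ ^ 2) * e1' - 2 * J * e2'

lemma hasDerivAt_normSq_ray {k : ℂ → ℂ} {e : ℂ} {ρ : ℝ} {k' : ℂ}
    (hk : HasDerivAt k k' (ρ * e)) :
    HasDerivAt (fun t : ℝ => ‖k (t * e)‖ ^ 2) (2 * (conj (k (ρ * e)) * k' * e).re) ρ := by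
  have h1 : HasDerivAt (fun w : ℂ => w * e) e (ρ : ℂ) := by
    simpa using (hasDerivAt_id (ρ : ℂ)).mul_const e
  have h2 : HasDerivAt (fun w : ℂ => k (w * e)) (k' * e) (ρ : ℂ) :=
    HasDerivAt.comp_of_eq (ρ : ℂ) hk h1 rfl
  have h3 := h2.real_of_complex
  have h2' : HasDerivAt (fun w : ℂ => -I * k (w * e)) (-I * (k' * e)) (ρ : ℂ) := h2.const_mul _
  have h4 := h2'.real_of_complex
  have h5 := (h3.pow 2).add (h4.pow 2)
  have : (fun t : ℝ => ‖k (t * e)‖ ^ 2) =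
      fun t : ℝ => (k (t * e)).re ^ 2 + (-I * k (t * e)).re ^ 2 := by
    funext t
    rw [← normSq_eq_norm_sq, normSq_apply]
    simp; ring
  rw [this]
  refine h5.congr_deriv ?_
  simp
  ring

/-- Integrated bound. -/
lemma bound_beta {h g : ℂ → ℂ} (hh : DifferentiableOn ℂ h (ball (0:ℂ) 1))
    (hg : DifferentiableOn ℂ g (ball (0:ℂ) 1))
    (hsp : ∀ z ∈ ball (0:ℂ) 1, ‖deriv g z‖ < ‖deriv h z‖)
    {e : ℂ} (he : ‖e‖ = 1) :
    ∀ ρ : ℝ, 0 ≤ ρ → ρ < 1 → ∀ β : ℝ, HasDerivAt (fun t : ℝ =>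
      Real.log (‖deriv h (t * e)‖ ^ 2 - ‖deriv g (t * e)‖ ^ 2) - (β - 2) * Real.log (1 + t)
        + (β + 2) * Real.log (1 - t))
      (2 * ((conj (deriv h (ρ * e)) * deriv (deriv h) (ρ * e)
          - conj (deriv g (ρ * e)) * deriv (deriv g) (ρ * e)) * e).re
          / (‖deriv h (ρ * e)‖ ^ 2 - ‖deriv g (ρ * e)‖ ^ 2)
        - (2 * β + 4 * ρ) / (1 - ρ ^ 2)) ρ := by
  intro ρ hρ0 hρ1 β
  have hz : (ρ : ℂ) * e ∈ ball (0:ℂ) 1 := by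
    simp [he, abs_of_nonneg hρ0, hρ1]
  have hd : ∀ {k : ℂ → ℂ}, DifferentiableOn ℂ k (ball (0:ℂ) 1) →
      HasDerivAt k (deriv k (ρ * e)) (ρ * e) := fun hk =>
    ((hk _ hz).differentiableAt (isOpen_ball.mem_nhds hz)).hasDerivAt
  have hJpos : 0 < ‖deriv h (ρ * e)‖ ^ 2 - ‖deriv g (ρ * e)‖ ^ 2 := by
    have := hsp _ hz
    have h0 := norm_nonneg (deriv g (ρ * e))
    nlinarith
  have d1 := ((hasDerivAt_normSq_ray (hd (hh.deriv isOpen_ball))).sub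
    (hasDerivAt_normSq_ray (hd (hg.deriv isOpen_ball)))).log hJpos.ne'
  have d2 := (((hasDerivAt_id ρ).const_add 1).log
    (by simp only [id]; linarith : (1 + id ρ : ℝ) ≠ 0)).const_mul (β - 2)
  have d3 := (((hasDerivAt_id ρ).const_sub 1).log
    (by simp only [id]; linarith : (1 - id ρ : ℝ) ≠ 0)).const_mul (β + 2)
  refine ((d1.sub d2).add d3).congr_deriv ?_
  have n1 : (1 + ρ) ≠ 0 := by linarith
  have n2 : (1 - ρ) ≠ 0 := by linarith
  have n3 : (1 - ρ ^ 2) ≠ 0 := by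
    rw [show 1 - ρ ^ 2 = (1 + ρ) * (1 - ρ) by ring]; exact mul_ne_zero n1 n2
  have e1 : ((conj (deriv h (ρ * e)) * deriv (deriv h) (ρ * e)
          - conj (deriv g (ρ * e)) * deriv (deriv g) (ρ * e)) * e).re =
     (conj (deriv h (ρ * e)) * deriv (deriv h) (ρ * e) * e).re
          - (conj (deriv g (ρ * e)) * deriv (deriv g) (ρ * e) * e).re := by
    rw [sub_mul, sub_re]
  rw [e1]
  have e2 : (2 * β + 4 * ρ) / (1 - ρ ^ 2) = (β - 2) * (1 / (1 + ρ)) - (β + 2) * (-1 / (1 - ρ)) := by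
    rw [show 1 - ρ ^ 2 = (1 + ρ) * (1 - ρ) by ring]
    field_simp
    ring
  rw [e2]
  simp only [id, Pi.sub_apply]
  ring

theorem AK_jacobian_bounds (h g : ℂ → ℂ)
    (hh : DifferentiableOn ℂ h (ball (0:ℂ) 1))
    (hg : DifferentiableOn ℂ g (ball (0:ℂ) 1))
    (hsp : ∀ z ∈ ball (0:ℂ) 1, ‖deriv g z‖ < ‖deriv h z‖)
    (h0 : h 0 = 0) (g0 : g 0 = 0) (hd1 : deriv h 0 = 1) (hb1 : ‖deriv g 0‖ < 1)
    (hconv : ∀ a ∈ ball (0:ℂ) 1, ∀ r : ℝ, 0 < r → r < 1 - ‖a‖ →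
        Convex ℝ ((fun z => h z + conj (g z)) '' ball a r)) :
    ∀ z ∈ ball (0:ℂ) 1,
      (1 - ‖deriv g 0‖ ^ 2) * (1 - ‖z‖) ^ (4 / Real.sqrt 3 - 2)
          / (1 + ‖z‖) ^ (4 / Real.sqrt 3 + 2)
        ≤ ‖deriv h z‖ ^ 2 - ‖deriv g z‖ ^ 2 ∧
      ‖deriv h z‖ ^ 2 - ‖deriv g z‖ ^ 2
        ≤ (1 - ‖deriv g 0‖ ^ 2) * (1 + ‖z‖) ^ (4 / Real.sqrt 3 - 2)
          / (1 - ‖z‖) ^ (4 / Real.sqrt 3 + 2) := by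
  intro z hz
  obtain ⟨e, he, hze⟩ : ∃ e : ℂ, ‖e‖ = 1 ∧ (‖z‖ : ℂ) * e = z := by
    by_cases hz0 : z = 0
    · exact ⟨1, by simp, by simp [hz0]⟩
    · have hn : (‖z‖ : ℂ) ≠ 0 := by simpa using hz0
      refine ⟨z / ‖z‖, ?_, by field_simp⟩
      rw [norm_div, Complex.norm_real, norm_norm, div_self (by simpa using hz0)]
  have hz1 : ‖z‖ < 1 := by simpa using hz
  have hconv' : ∀ a ∈ ball (0:ℂ) 1, ∀ r : ℝ, 0 < r → r < 1 - ‖a‖ →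
        Convex ℝ (harm h g '' ball a r) := hconv
  have hder := bound_beta hh hg hsp he
  have hJ : ∀ y ∈ ball (0:ℂ) 1, 0 < ‖deriv h y‖ ^ 2 - ‖deriv g y‖ ^ 2 := by
    intro y hy
    have := hsp y hy
    have h0 := norm_nonneg (deriv g y)
    nlinarith
  have hee : e * conj e = 1 := by rw [mul_conj, normSq_eq_norm_sq, he]; simp
  have hineq : ∀ ρ : ℝ, 0 ≤ ρ → ρ < 1 →
      2 * ((conj (deriv h (ρ * e)) * deriv (deriv h) (ρ * e)
          - conj (deriv g (ρ * e)) * deriv (deriv g) (ρ * e)) * e).re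
          / (‖deriv h (ρ * e)‖ ^ 2 - ‖deriv g (ρ * e)‖ ^ 2)
        - (2 * (4 / Real.sqrt 3) + 4 * ρ) / (1 - ρ ^ 2) ≤ 0 ∧
      0 ≤ 2 * ((conj (deriv h (ρ * e)) * deriv (deriv h) (ρ * e)
          - conj (deriv g (ρ * e)) * deriv (deriv g) (ρ * e)) * e).re
          / (‖deriv h (ρ * e)‖ ^ 2 - ‖deriv g (ρ * e)‖ ^ 2)
        - (2 * (-(4 / Real.sqrt 3)) + 4 * ρ) / (1 - ρ ^ 2) := by
    intro ρ hρ0 hρ1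
    have hy : (ρ : ℂ) * e ∈ ball (0:ℂ) 1 := by
      simp [he, abs_of_nonneg hρ0, hρ1]
    have hny : ‖(ρ : ℂ) * e‖ = ρ := by simp [he, abs_of_nonneg hρ0]
    have k1 := key_avg hh hg hsp hconv' hy he
    have k2 := key_avg hh hg hsp hconv' hy (u := -e) (by rw [norm_neg, he])
    have hJy := hJ _ hy
    rw [hny] at k1 k2
    have r1 : ((ρ : ℂ) * e * conj e).re = ρ := by rw [mul_assoc, hee]; simp
    rw [map_neg, mul_neg, mul_neg, neg_re, neg_re, r1] at k2
    rw [r1] at k1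
    generalize ((conj (deriv h (ρ * e)) * deriv (deriv h) (ρ * e)
          - conj (deriv g (ρ * e)) * deriv (deriv g) (ρ * e)) * e).re = X at *
    generalize ‖deriv h (ρ * e)‖ ^ 2 - ‖deriv g (ρ * e)‖ ^ 2 = J at *
    have hq : 0 < 1 - ρ ^ 2 := by nlinarith
    constructor
    · rw [sub_nonpos, div_le_div_iff₀ hJy hq]
      linear_combination 2 * k2
    · rw [sub_nonneg, div_le_div_iff₀ hq hJy]
      linear_combination 2 * k1
  have h0e : ((0:ℝ) : ℂ) * e = 0 := by simp
  have hl0 : 0 < 1 - ‖deriv g 0‖ ^ 2 := by nlinarith [norm_nonneg (deriv g 0)]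
  have hJz := hJ z hz
  have hp1 : 0 < 1 + ‖z‖ := by positivity
  have hp2 : 0 < 1 - ‖z‖ := by linarith
  have hI : ∀ {ρ : ℝ}, ρ ∈ interior (Set.Ico (0:ℝ) 1) → 0 ≤ ρ ∧ ρ < 1 := by
    intro ρ hρ
    have := interior_subset hρ
    exact this
  constructor
  · have hm := monotoneOn_of_deriv_nonneg (convex_Ico (0:ℝ) 1)
      (fun ρ hρ => (hder ρ hρ.1 hρ.2 (-(4 / Real.sqrt 3))).continuousAt.continuousWithinAt)
      (fun ρ hρ => (hder ρ (hI hρ).1 (hI hρ).2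
        (-(4 / Real.sqrt 3))).differentiableAt.differentiableWithinAt)
      (fun ρ hρ => by
        rw [(hder ρ (hI hρ).1 (hI hρ).2 (-(4 / Real.sqrt 3))).deriv]
        exact (hineq ρ (hI hρ).1 (hI hρ).2).2)
    have := hm (by simp : (0:ℝ) ∈ Set.Ico (0:ℝ) 1) ⟨norm_nonneg z, hz1⟩ (norm_nonneg z)
    simp only [h0e, hze, hd1] at this
    simp only [norm_one, one_pow, add_zero, sub_zero, Real.log_one, mul_zero] at this
    rw [div_le_iff₀ (by positivity), ← Real.log_le_log_iff (by positivity) (by positivity),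
      Real.log_mul hl0.ne' (by positivity), Real.log_mul hJz.ne' (by positivity),
      Real.log_rpow hp2, Real.log_rpow hp1]
    linarith
  · have hm := antitoneOn_of_deriv_nonpos (convex_Ico (0:ℝ) 1)
      (fun ρ hρ => (hder ρ hρ.1 hρ.2 (4 / Real.sqrt 3)).continuousAt.continuousWithinAt)
      (fun ρ hρ => (hder ρ (hI hρ).1 (hI hρ).2
        (4 / Real.sqrt 3)).differentiableAt.differentiableWithinAt)
      (fun ρ hρ => by
        rw [(hder ρ (hI hρ).1 (hI hρ).2 (4 / Real.sqrt 3)).deriv]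
        exact (hineq ρ (hI hρ).1 (hI hρ).2).1)
    have := hm (by simp : (0:ℝ) ∈ Set.Ico (0:ℝ) 1) ⟨norm_nonneg z, hz1⟩ (norm_nonneg z)
    simp only [h0e, hze, hd1] at this
    simp only [norm_one, one_pow, add_zero, sub_zero, Real.log_one, mul_zero] at this
    rw [le_div_iff₀ (by positivity), ← Real.log_le_log_iff (by positivity) (by positivity),
      Real.log_mul hl0.ne' (by positivity), Real.log_mul hJz.ne' (by positivity),
      Real.log_rpow hp2, Real.log_rpow hp1]
    linarith
end
end

section
/- Let f = h + \overline{g} \in \mathcal{AK}_H with b_1 = g'(0), and for 0 < r < 1 let A(f(\mathbb{D}_r)) = \iint_{\mathbb{D}_r} J_f(z)\,dx\,dy denote the area of f(\mathbb{D}_r), where \mathbb{D}_r = \{z : |z| < r\} and J_f = |h'|^2 - |g'|^2. Then (\pi(1-|b_1|^2)/26)\{3 - (3r^2 + 8\sqrt{3} r + 3) (1-r)^{4/\sqrt{3}-1}/(1+r)^{4/\sqrt{3}+1}\} \leq A(f(\mathbb{D}_r)) \leq (\pi(1-|b_1|^2)/26)\{3 - (3r^2 - 8\sqrt{3} r + 3)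 (1+r)^{4/\sqrt{3}-1}/(1-r)^{4/\sqrt{3}+1}\}. -/
open Complex Metric ComplexConjugate MeasureTheory Real

noncomputable section

/-- second order test on a circle for the real part of a holomorphic function -/
lemma holo_max (F : ℂ → ℂ) (hF : DifferentiableOn ℂ F (ball (0:ℂ) 1)) (a ζ : ℂ)
    (hsub : closedBall a ‖ζ‖ ⊆ ball (0:ℂ) 1)
    (hmax : ∀ z ∈ closedBall a ‖ζ‖, (F z).re ≤ (F (a + ζ)).re) :
    (ζ * deriv F (a + ζ)).im = 0 ∧ 0 ≤ (ζ * deriv F (a + ζ)).re ∧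
    0 ≤ (ζ * deriv F (a + ζ) + ζ ^ 2 * deriv (deriv F) (a + ζ)).re := by
  have hF' : DifferentiableOn ℂ (deriv F) (ball (0:ℂ) 1) := hF.deriv isOpen_ball
  have hd : ∀ z ∈ closedBall a ‖ζ‖, HasDerivAt F (deriv F z) z := fun z hz =>
    (hF.differentiableAt (isOpen_ball.mem_nhds (hsub hz))).hasDerivAt
  have hd' : ∀ z ∈ closedBall a ‖ζ‖, HasDerivAt (deriv F) (deriv (deriv F) z) z := fun z hz =>
    (hF'.differentiableAt (isOpen_ball.mem_nhds (hsub hz))).hasDerivAt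
  have hcm : ∀ t : ℝ, a + ζ * exp (t * I) ∈ closedBall a ‖ζ‖ := by
    intro t
    simp [dist_eq_norm, Complex.norm_exp_ofReal_mul_I]
  have hc : ∀ t : ℝ, HasDerivAt (fun t : ℝ => a + ζ * exp (t * I)) (ζ * (exp (t * I) * I)) t := by
    intro t
    have h1 : HasDerivAt (fun t : ℝ => ((t : ℂ) * I)) I t := by
      simpa using (Complex.ofRealCLM.hasDerivAt (x := t)).mul_const I
    exact ((h1.cexp).const_mul ζ).const_add a
  have hΦ : ∀ t : ℝ, HasDerivAt (fun t : ℝ => (F (a + ζ * exp (t * I))).re)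
      (deriv F (a + ζ * exp (t * I)) * (ζ * (exp (t * I) * I))).re t := by
    intro t
    have h2 := (hd _ (hcm t)).scomp t (hc t)
    have h3 := Complex.reCLM.hasFDerivAt.comp_hasDerivAt t h2
    simpa [Function.comp_def, mul_comm, mul_left_comm, mul_assoc] using h3
  have hdΦ : deriv (fun t : ℝ => (F (a + ζ * exp (t * I))).re) =
      fun t : ℝ => (deriv F (a + ζ * exp (t * I)) * (ζ * (exp (t * I) * I))).re :=
    funext fun t => (hΦ t).deriv
  have hΦ2 : HasDerivAt (fun t : ℝ => (deriv F (a + ζ * exp (t * I)) * (ζ * (exp (t * I) * I))).re)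
      (-(ζ * deriv F (a + ζ) + ζ ^ 2 * deriv (deriv F) (a + ζ)).re) 0 := by
    have h2 := (hd' _ (hcm 0)).scomp (0:ℝ) (hc 0)
    have h1 : HasDerivAt (fun t : ℝ => ((t : ℂ) * I)) I 0 := by
      simpa using (Complex.ofRealCLM.hasDerivAt (x := 0)).mul_const I
    have h4 := ((h1.cexp).mul_const I).const_mul ζ
    have h5 := h2.mul h4
    have h3 := Complex.reCLM.hasFDerivAt.comp_hasDerivAt (0:ℝ) h5
    have hI : I * I = -1 := I_mul_I
    refine h3.congr_deriv ?_
    simp only [reCLM_apply, ← Complex.neg_re]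
    congr 1
    simp
    linear_combination (ζ ^ 2 * deriv (deriv F) (a + ζ)) * hI
  have hlm : IsLocalMax (fun t : ℝ => (F (a + ζ * exp (t * I))).re) 0 := by
    refine Filter.Eventually.of_forall fun t => ?_
    simpa using hmax _ (hcm t)
  have hd0 : deriv (fun t : ℝ => (F (a + ζ * exp (t * I))).re) 0 = 0 := hlm.deriv_eq_zero
  refine ⟨?_, ?_, ?_⟩
  · have := hd0
    rw [hdΦ] at this
    simp at this
    simp
    linarith
  · have hmem : a + ζ ∈ closedBall a ‖ζ‖ := by simp
    have hre : HasFDerivWithinAt (fun z => (F z).re)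
        (Complex.reCLM.comp ((deriv F (a+ζ)) • (1 : ℂ →L[ℝ] ℂ))) (closedBall a ‖ζ‖) (a + ζ) := by
      have := (hd _ hmem).complexToReal_fderiv
      exact (Complex.reCLM.hasFDerivAt.comp (a+ζ) this).hasFDerivWithinAt
    have hmx : IsLocalMaxOn (fun z => (F z).re) (closedBall a ‖ζ‖) (a + ζ) :=
      (show IsMaxOn (fun z => (F z).re) (closedBall a ‖ζ‖) (a + ζ) from hmax).localize
    have hy : -ζ ∈ posTangentConeAt (closedBall a ‖ζ‖) (a + ζ) := by
      apply mem_posTangentConeAt_of_segment_subset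
      apply (convex_closedBall a ‖ζ‖).segment_subset hmem
      simp
    have := hmx.hasFDerivWithinAt_nonpos hre hy
    simp at this
    simp
    linarith
  · by_contra hneg
    push Not at hneg
    have hdd : deriv (deriv (fun t : ℝ => (F (a + ζ * exp (t * I))).re)) 0 > 0 := by
      rw [hdΦ, hΦ2.deriv]; linarith
    have hmin := isLocalMin_of_deriv_deriv_pos hdd hd0 (hΦ 0).continuousAt
    have heq : (fun t : ℝ => (F (a + ζ * exp (t * I))).re) =ᶠ[nhds 0]
        fun _ => (F (a + ζ * exp ((0:ℝ) * I))).re := by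
      filter_upwards [hlm, hmin] with t h1 h2
      exact le_antisymm h1 h2
    have := heq.deriv.deriv.eq_of_nhds
    simp at this hdd
    linarith

lemma equiv_exists (H G : ℂ) (hHG : ‖G‖ < ‖H‖) :
    ∃ e : ℂ ≃L[ℝ] ℂ, (e : ℂ →L[ℝ] ℂ) = H • (1 : ℂ →L[ℝ] ℂ) +
      (Complex.conjCLE : ℂ →L[ℝ] ℂ).comp (G • (1 : ℂ →L[ℝ] ℂ)) := by
  set L : ℂ →L[ℝ] ℂ := H • (1 : ℂ →L[ℝ] ℂ) +
      (Complex.conjCLE : ℂ →L[ℝ] ℂ).comp (G • (1 : ℂ →L[ℝ] ℂ)) with hL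
  have hinj : Function.Injective (L : ℂ →ₗ[ℝ] ℂ) := by
    rw [injective_iff_map_eq_zero]
    intro v hv
    by_contra hv0
    have h1 : H * v + conj (G * v) = 0 := by simpa [hL] using hv
    have h2 : ‖H * v‖ = ‖G * v‖ := by
      rw [eq_neg_of_add_eq_zero_left h1, norm_neg, RCLike.norm_conj]
    rw [norm_mul, norm_mul] at h2
    have := norm_pos_iff.mpr hv0
    nlinarith
  refine ⟨(LinearEquiv.ofInjectiveEndo (L : ℂ →ₗ[ℝ] ℂ) hinj).toContinuousLinearEquiv, ?_⟩
  ext v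
  rfl

lemma strict_exists (h g : ℂ → ℂ)
    (hh : DifferentiableOn ℂ h (ball (0:ℂ) 1))
    (hg : DifferentiableOn ℂ g (ball (0:ℂ) 1))
    (hsp : ∀ z ∈ ball (0:ℂ) 1, ‖deriv g z‖ < ‖deriv h z‖) (z : ℂ) (hz : z ∈ ball (0:ℂ) 1) :
    ∃ e : ℂ ≃L[ℝ] ℂ, (∀ v, e v = deriv h z * v + conj (deriv g z * v)) ∧
      HasStrictFDerivAt (fun z => h z + conj (g z)) (e : ℂ →L[ℝ] ℂ) z := by
  obtain ⟨e, he⟩ := equiv_exists _ _ (hsp z hz)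
  refine ⟨e, fun v => ?_, ?_⟩
  · have := congrArg (fun L : ℂ →L[ℝ] ℂ => L v) he
    simpa using this
  · rw [he]
    have h1 := ((hh.analyticAt (isOpen_ball.mem_nhds hz)).hasStrictDerivAt).complexToReal_fderiv
    have h2 := ((hg.analyticAt (isOpen_ball.mem_nhds hz)).hasStrictDerivAt).complexToReal_fderiv
    exact h1.add ((Complex.conjCLE : ℂ →L[ℝ] ℂ).hasStrictFDerivAt.comp z h2)

lemma image_open (h g : ℂ → ℂ)
    (hh : DifferentiableOn ℂ h (ball (0:ℂ) 1))
    (hg : DifferentiableOn ℂ g (ball (0:ℂ) 1))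
    (hsp : ∀ z ∈ ball (0:ℂ) 1, ‖deriv g z‖ < ‖deriv h z‖) (U : Set ℂ) (hU : IsOpen U)
    (hUs : U ⊆ ball (0:ℂ) 1) : IsOpen ((fun z => h z + conj (g z)) '' U) := by
  rw [isOpen_iff_mem_nhds]
  rintro _ ⟨z, hz, rfl⟩
  obtain ⟨e, -, he⟩ := strict_exists h g hh hg hsp z (hUs hz)
  rw [← he.map_nhds_eq_of_equiv]
  exact Filter.image_mem_map (hU.mem_nhds hz)

lemma support_exists (h g : ℂ → ℂ)
    (hh : DifferentiableOn ℂ h (ball (0:ℂ) 1))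
    (hg : DifferentiableOn ℂ g (ball (0:ℂ) 1))
    (hsp : ∀ z ∈ ball (0:ℂ) 1, ‖deriv g z‖ < ‖deriv h z‖) (a : ℂ) (ρ : ℝ) (hρ : 0 < ρ)
    (hsub : ball a ρ ⊆ ball (0:ℂ) 1)
    (hconv : Convex ℝ ((fun z => h z + conj (g z)) '' ball a ρ)) (w : ℂ)
    (hw : w ∉ (fun z => h z + conj (g z)) '' ball a ρ) :
    ∃ u : ℂ, u ≠ 0 ∧ ∀ z ∈ ball a ρ, (conj u * h z + u * g z).re < (conj u * w).re := by
  obtain ⟨φ, hφ⟩ := geometric_hahn_banach_open_point hconv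
    (image_open h g hh hg hsp _ isOpen_ball hsub) hw
  have hφe : ∀ y : ℂ, φ y = (conj (⟨φ 1, φ I⟩ : ℂ) * y).re := by
    intro y
    have hy : y = y.re • (1:ℂ) + y.im • I := by
      apply Complex.ext <;> simp
    conv_lhs => rw [hy, map_add, map_smul, map_smul]
    simp
    ring
  have hmain : ∀ z ∈ ball a ρ, (conj (⟨φ 1, φ I⟩ : ℂ) * h z + (⟨φ 1, φ I⟩ : ℂ) * g z).re
      < (conj (⟨φ 1, φ I⟩ : ℂ) * w).re := by
    intro z hz
    have := hφ _ ⟨z, hz, rfl⟩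
    rw [← hφe w]
    refine lt_of_eq_of_lt ?_ this
    refine Eq.trans ?_ (hφe (h z + conj (g z))).symm
    simp
    ring
  refine ⟨_, ?_, hmain⟩
  intro h0
  have := hmain a (mem_ball_self hρ)
  rw [h0] at this
  simp at this

lemma key (h g : ℂ → ℂ)
    (hh : DifferentiableOn ℂ h (ball (0:ℂ) 1))
    (hg : DifferentiableOn ℂ g (ball (0:ℂ) 1))
    (hsp : ∀ z ∈ ball (0:ℂ) 1, ‖deriv g z‖ < ‖deriv h z‖) (a ζ : ℂ) (hζ : ζ ≠ 0)
    (hsub : closedBall a ‖ζ‖ ⊆ ball (0:ℂ) 1) (u : ℂ) (hu : u ≠ 0)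
    (hmax : ∀ z ∈ ball a ‖ζ‖, (conj u * h z + u * g z).re <
      (conj u * (h (a + ζ) + conj (g (a + ζ)))).re) :
    ∃ μ : ℝ, 0 < μ ∧ ζ * (conj u * deriv h (a + ζ) + u * deriv g (a + ζ)) = μ ∧
      u * (conj ζ * ζ * (conj (deriv h (a + ζ)) * deriv h (a + ζ)
        - conj (deriv g (a + ζ)) * deriv g (a + ζ)))
        = μ * (ζ * deriv h (a + ζ) - conj (ζ * deriv g (a + ζ))) ∧
      0 ≤ μ + (ζ ^ 2 * (conj u * deriv (deriv h) (a + ζ) + u * deriv (deriv g) (a + ζ))).re := by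
  set F : ℂ → ℂ := fun z => conj u * h z + u * g z with hFdef
  have hFd : DifferentiableOn ℂ F (ball (0:ℂ) 1) := (hh.const_mul _).add (hg.const_mul _)
  have hmem : a + ζ ∈ closedBall a ‖ζ‖ := by simp
  have hmem1 := hsub hmem
  have hd : ∀ z ∈ ball (0:ℂ) 1, deriv F z = conj u * deriv h z + u * deriv g z := by
    intro z hz
    have h1 := (hh.differentiableAt (isOpen_ball.mem_nhds hz)).hasDerivAt
    have h2 := (hg.differentiableAt (isOpen_ball.mem_nhds hz)).hasDerivAt
    exact ((h1.const_mul _).add (h2.const_mul _)).deriv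
  have hdd : deriv (deriv F) (a + ζ) =
      conj u * deriv (deriv h) (a + ζ) + u * deriv (deriv g) (a + ζ) := by
    have h1 := ((hh.deriv isOpen_ball).differentiableAt (isOpen_ball.mem_nhds hmem1)).hasDerivAt
    have h2 := ((hg.deriv isOpen_ball).differentiableAt (isOpen_ball.mem_nhds hmem1)).hasDerivAt
    have heq : deriv F =ᶠ[nhds (a + ζ)] fun z => conj u * deriv h z + u * deriv g z := by
      filter_upwards [isOpen_ball.mem_nhds hmem1] with z hz using hd z hz
    rw [heq.deriv_eq]
    exact ((h1.const_mul _).add (h2.const_mul _)).deriv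
  have hFre : (F (a + ζ)).re = (conj u * (h (a + ζ) + conj (g (a + ζ)))).re := by
    simp [hFdef]; ring
  have hmax' : ∀ z ∈ closedBall a ‖ζ‖, (F z).re ≤ (F (a + ζ)).re := by
    have hcl : closure (ball a ‖ζ‖) = closedBall a ‖ζ‖ := closure_ball a (norm_ne_zero_iff.mpr hζ)
    intro z hz
    rw [← hcl] at hz
    have hc : ContinuousOn (fun z => (F z).re) (closure (ball a ‖ζ‖)) := by
      rw [hcl]
      exact Complex.continuous_re.comp_continuousOn (hFd.continuousOn.mono hsub)
    refine ContinuousWithinAt.closure_le hz (f := fun z => (F z).re)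
      (g := fun _ => (F (a + ζ)).re) ((hc z hz).mono subset_closure)
      continuousWithinAt_const ?_
    intro y hy
    rw [hFre]
    exact (hmax y hy).le
  obtain ⟨h1, h2, h3⟩ := holo_max F hFd a ζ hsub hmax'
  rw [hdd, hd _ hmem1] at h3
  rw [hd _ hmem1] at h1 h2
  set H := deriv h (a + ζ)
  set G := deriv g (a + ζ)
  set μ := (ζ * (conj u * H + u * G)).re with hμ
  have he : ζ * (conj u * H + u * G) = (μ : ℂ) := by
    apply Complex.ext
    · simp [hμ]
    · rw [h1]; simp
  have he' : conj ζ * (u * conj H + conj u * conj G) = (μ : ℂ) := by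
    have := congrArg (starRingEnd ℂ) he
    simpa using this
  have hN : u * (conj ζ * ζ * (conj H * H - conj G * G)) = μ * (ζ * H - conj (ζ * G)) := by
    rw [map_mul]
    linear_combination (ζ * H) * he' - (conj ζ * conj G) * he
  have hJ : (conj ζ * ζ * (conj H * H - conj G * G)) ≠ 0 := by
    have hlt := hsp _ hmem1
    rw [Complex.conj_mul', Complex.conj_mul', Complex.conj_mul']
    norm_cast
    have : 0 < ‖ζ‖ := norm_pos_iff.mpr hζ
    have h5 : 0 < ‖H‖ ^ 2 - ‖G‖ ^ 2 := by
      have : 0 ≤ ‖G‖ := norm_nonneg _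
      have h6 : ‖G‖ < ‖H‖ := hlt
      nlinarith
    positivity
  refine ⟨μ, lt_of_le_of_ne h2 ?_, he, hN, ?_⟩
  · intro h0
    rw [← h0] at hN
    simp only [Complex.ofReal_zero, zero_mul] at hN
    exact (mul_ne_zero hu hJ) hN
  · rw [Complex.add_re] at h3
    exact h3

lemma path_exists (h g : ℂ → ℂ)
    (hh : DifferentiableOn ℂ h (ball (0:ℂ) 1))
    (hg : DifferentiableOn ℂ g (ball (0:ℂ) 1))
    (hsp : ∀ z ∈ ball (0:ℂ) 1, ‖deriv g z‖ < ‖deriv h z‖) (ζ : ℂ) (hζ : ζ ≠ 0)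
    (hsub : closedBall 0 ‖ζ‖ ⊆ ball (0:ℂ) 1) (u : ℂ) (hu : u ≠ 0)
    (hmax : ∀ z ∈ ball 0 ‖ζ‖, (conj u * h z + u * g z).re <
      (conj u * (h ζ + conj (g ζ))).re) :
    ∃ γ : ℝ → ℂ, Filter.Tendsto γ (nhdsWithin 0 (Set.Ioi 0)) (nhds ζ) ∧
      (∀ᶠ ε : ℝ in nhdsWithin (0:ℝ) (Set.Ioi 0), γ ε ∈ ball (0:ℂ) ‖ζ‖ ∧
        h (γ ε) + conj (g (γ ε)) = h ζ + conj (g ζ) - ε * u) := by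
  obtain ⟨μ, hμ, hμe, -, -⟩ := key h g hh hg hsp 0 ζ hζ hsub u hu (by simpa using hmax)
  rw [zero_add] at hμe
  have hmem1 : ζ ∈ ball (0:ℂ) 1 := hsub (by simp)
  obtain ⟨e, hev, he⟩ := strict_exists h g hh hg hsp ζ hmem1
  set f : ℂ → ℂ := fun z => h z + conj (g z) with hf
  set v := e.symm u with hv
  have hvu : deriv h ζ * v + conj (deriv g ζ * v) = u := by
    rw [← hev, hv]; simp
  have hpos : 0 < (conj ζ * v).re := by
    have h1 : (conj u * u).re = ((conj u * deriv h ζ + u * deriv g ζ) * v).re := by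
      have e1 := congrArg Complex.re hvu
      have e2 := congrArg Complex.im hvu
      simp at e1 e2
      simp
      linear_combination (-u.re) * e1 - u.im * e2
    have h2 : (‖ζ‖ ^ 2 : ℝ) * (conj u * u).re = μ * (conj ζ * v).re := by
      rw [h1, ← Complex.re_ofReal_mul, ← Complex.re_ofReal_mul, ← hμe]
      congr 1
      push_cast
      rw [← Complex.conj_mul']
      ring
    have h3 : (conj u * u).re = ‖u‖ ^ 2 := by
      rw [Complex.conj_mul']; norm_cast
    have h4 : 0 < μ * (conj ζ * v).re := by
      rw [← h2, h3]
      have := norm_pos_iff.mpr hζ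
      have := norm_pos_iff.mpr hu
      positivity
    exact (pos_iff_pos_of_mul_pos h4).mp hμ
  set Λ := he.localInverse f e ζ with hΛ
  have hΛd : HasStrictFDerivAt Λ (e.symm : ℂ →L[ℝ] ℂ) (f ζ) := he.to_localInverse
  have hΛ0 : Λ (f ζ) = ζ := he.localInverse_apply_image
  have hp : HasDerivAt (fun ε : ℝ => f ζ - ε * u) (-u) 0 := by
    have := ((Complex.ofRealCLM.hasDerivAt (x := 0)).mul_const u).const_sub (f ζ)
    simpa using this
  have hγd : HasDerivAt (fun ε : ℝ => Λ (f ζ - ε * u)) (-v) 0 := by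
    have h1 : HasFDerivAt Λ (e.symm : ℂ →L[ℝ] ℂ) (f ζ - ((0:ℝ):ℂ) * u) := by
      simpa using hΛd.hasFDerivAt
    have := h1.comp_hasDerivAt (0:ℝ) hp
    simpa [hv, Function.comp_def] using this
  have hγ0 : Λ (f ζ - ((0:ℝ):ℂ) * u) = ζ := by simpa using hΛ0
  have hq : HasDerivAt (fun ε : ℝ => (conj (Λ (f ζ - ε * u)) * Λ (f ζ - ε * u)).re)
      (-2 * (conj ζ * v).re) 0 := by
    have h1 := ((Complex.conjCLE : ℂ →L[ℝ] ℂ).hasFDerivAt.comp_hasDerivAt (0:ℝ) hγd)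
    have h2 := Complex.reCLM.hasFDerivAt.comp_hasDerivAt (0:ℝ) (h1.mul hγd)
    refine h2.congr_deriv ?_
    simp [hΛ0]
    ring
  refine ⟨fun ε => Λ (f ζ - ε * u), ?_, ?_⟩
  · have := hγd.continuousAt.tendsto
    rw [hγ0] at this
    exact this.mono_left nhdsWithin_le_nhds
  · have hright : ∀ᶠ ε : ℝ in nhdsWithin (0:ℝ) (Set.Ioi 0), f (Λ (f ζ - ε * u)) = f ζ - ε * u := by
      have h1 := he.eventually_right_inverse
      have h2 : Filter.Tendsto (fun ε : ℝ => f ζ - ε * u) (nhds 0) (nhds (f ζ)) := by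
        simpa using hp.continuousAt.tendsto
      exact (h2.eventually h1).filter_mono nhdsWithin_le_nhds
    have hin : ∀ᶠ ε : ℝ in nhdsWithin (0:ℝ) (Set.Ioi 0),
        (conj (Λ (f ζ - ε * u)) * Λ (f ζ - ε * u)).re < (conj ζ * ζ).re := by
      have h1 := (hasDerivAt_iff_tendsto_slope.mp hq).mono_left
        (nhdsWithin_mono (0:ℝ) (fun x (hx : x ∈ Set.Ioi (0:ℝ)) => ne_of_gt hx))
      have h2 := h1.eventually (gt_mem_nhds (show -2 * (conj ζ * v).re < 0 by linarith))
      filter_upwards [h2, self_mem_nhdsWithin] with ε h3 h4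
      rw [slope_def_field, hγ0] at h3
      have h4' : (0:ℝ) < ε := h4
      rw [sub_zero, div_lt_iff₀ h4', zero_mul] at h3
      linarith
    filter_upwards [hright, hin] with ε h1 h2
    refine ⟨?_, h1⟩
    rw [Complex.conj_mul', Complex.conj_mul'] at h2
    norm_cast at h2
    rw [mem_ball_zero_iff]
    exact lt_of_pow_lt_pow_left₀ 2 (norm_nonneg _) h2

lemma inj_closed (h g : ℂ → ℂ)
    (hh : DifferentiableOn ℂ h (ball (0:ℂ) 1))
    (hg : DifferentiableOn ℂ g (ball (0:ℂ) 1))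
    (hsp : ∀ z ∈ ball (0:ℂ) 1, ‖deriv g z‖ < ‖deriv h z‖) (r : ℝ) (hr : 0 < r) (hr1 : r < 1)
    (hconv : Convex ℝ ((fun z => h z + conj (g z)) '' ball 0 r))
    (hinj : Set.InjOn (fun z => h z + conj (g z)) (ball 0 r)) :
    Set.InjOn (fun z => h z + conj (g z)) (closedBall 0 r) := by
  set f : ℂ → ℂ := fun z => h z + conj (g z) with hf
  have hsub : closedBall (0:ℂ) r ⊆ ball 0 1 := closedBall_subset_ball hr1
  have hfc : ∀ z ∈ ball (0:ℂ) 1, ContinuousAt f z := fun z hz => by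
    obtain ⟨e, -, he⟩ := strict_exists h g hh hg hsp z hz
    exact he.hasFDerivAt.continuousAt
  have hcl : closure (ball (0:ℂ) r) = closedBall 0 r := closure_ball 0 hr.ne'
  -- an interior point cannot collide with another point
  have hA : ∀ z₁ ∈ ball (0:ℂ) r, ∀ z₂ ∈ closedBall (0:ℂ) r, f z₁ = f z₂ → z₁ = z₂ := by
    intro z₁ h₁ z₂ h₂ heq
    by_contra hne
    obtain ⟨U, V, hU, hV, hzU, hzV, hUV⟩ := t2_separation hne
    have hop : IsOpen (f '' (U ∩ ball 0 r)) := image_open h g hh hg hsp _ (hU.inter isOpen_ball)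
      ((Set.inter_subset_right).trans (ball_subset_ball hr1.le))
    have hmem : f '' (U ∩ ball 0 r) ∈ nhds (f z₂) := by
      rw [← heq]
      exact hop.mem_nhds ⟨z₁, ⟨hzU, h₁⟩, rfl⟩
    have hev := (hfc z₂ (hsub h₂)).eventually hmem
    rw [← hcl] at h₂
    obtain ⟨y, ⟨hy1, hy2⟩, hyb⟩ := mem_closure_iff_nhds.mp h₂ _
      (Filter.inter_mem hev (hV.mem_nhds hzV))
    obtain ⟨x, ⟨hxU, hxb⟩, hxy⟩ := hy1
    have : x = y := hinj hxb hyb hxy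
    subst this
    exact Set.disjoint_left.mp hUV hxU hy2
  intro z₁ h₁ z₂ h₂ heq
  by_contra hne
  have hb : ∀ z ∈ closedBall (0:ℂ) r, ∀ z' ∈ closedBall (0:ℂ) r, f z = f z' → z ≠ z' → ‖z‖ = r := by
    intro z hz z' hz' h1 h2
    rw [mem_closedBall_zero_iff] at hz
    refine le_antisymm hz (not_lt.mp fun hlt => h2 ?_)
    exact hA z (by simpa using hlt) z' hz' h1
  have hn1 := hb z₁ h₁ z₂ h₂ heq hne
  have hn2 := hb z₂ h₂ z₁ h₁ heq.symm (Ne.symm hne)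
  have hw : f z₁ ∉ f '' ball 0 r := by
    rintro ⟨z, hz, hze⟩
    have := hA z hz z₁ h₁ hze
    subst this
    rw [mem_ball_zero_iff] at hz
    linarith
  obtain ⟨u, hu, hmax⟩ := support_exists h g hh hg hsp 0 r hr (ball_subset_ball hr1.le) hconv _ hw
  have hz1 : z₁ ≠ 0 := by rintro rfl; simp at hn1; linarith
  have hz2 : z₂ ≠ 0 := by rintro rfl; simp at hn2; linarith
  obtain ⟨γ₁, ht1, he1⟩ := path_exists h g hh hg hsp z₁ hz1 (by rw [hn1]; exact hsub) u hu
    (by rw [hn1]; exact hmax)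
  obtain ⟨γ₂, ht2, he2⟩ := path_exists h g hh hg hsp z₂ hz2 (by rw [hn2]; exact hsub) u hu
    (by rw [hn2]; intro z hz; have := hmax z hz; rw [heq] at this; exact this)
  obtain ⟨U, V, hU, hV, hzU, hzV, hUV⟩ := t2_separation hne
  have := (((ht1.eventually (hU.mem_nhds hzU)).and (ht2.eventually (hV.mem_nhds hzV))).and
    (he1.and he2)).exists
  obtain ⟨ε, ⟨hεU, hεV⟩, ⟨hb1, hf1⟩, ⟨hb2, hf2⟩⟩ := this
  rw [hn1] at hb1
  rw [hn2] at hb2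
  have h5 : γ₁ ε = γ₂ ε := by
    apply hinj hb1 hb2
    change h (γ₁ ε) + conj (g (γ₁ ε)) = h (γ₂ ε) + conj (g (γ₂ ε))
    rw [hf1, hf2]
    have : h z₁ + conj (g z₁) = h z₂ + conj (g z₂) := heq
    rw [this]
  rw [h5] at hεU
  exact Set.disjoint_left.mp hUV hεU hεV

lemma inj_all (h g : ℂ → ℂ)
    (hh : DifferentiableOn ℂ h (ball (0:ℂ) 1))
    (hg : DifferentiableOn ℂ g (ball (0:ℂ) 1))
    (hsp : ∀ z ∈ ball (0:ℂ) 1, ‖deriv g z‖ < ‖deriv h z‖)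
    (hconv : ∀ a ∈ ball (0:ℂ) 1, ∀ r : ℝ, 0 < r → r < 1 - ‖a‖ →
        Convex ℝ ((fun z => h z + conj (g z)) '' ball a r)) :
    Set.InjOn (fun z => h z + conj (g z)) (ball 0 1) := by
  set f : ℂ → ℂ := fun z => h z + conj (g z) with hf
  have hfc : ∀ z ∈ ball (0:ℂ) 1, ContinuousAt f z := fun z hz => by
    obtain ⟨e, -, he⟩ := strict_exists h g hh hg hsp z hz
    exact he.hasFDerivAt.continuousAt
  have hloc : ∀ z ∈ ball (0:ℂ) 1, ∃ u ∈ nhds z, Set.InjOn f u := fun z hz => by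
    obtain ⟨e, -, he⟩ := strict_exists h g hh hg hsp z hz
    have h1 := (he.toOpenPartialHomeomorph f).injOn
    rw [he.toOpenPartialHomeomorph_coe] at h1
    exact ⟨_, (he.toOpenPartialHomeomorph f).open_source.mem_nhds
      he.mem_toOpenPartialHomeomorph_source, h1⟩
  set S : Set ℝ := {r | 0 ≤ r ∧ r ≤ 1 ∧ Set.InjOn f (ball 0 r)} with hS
  have h0S : (0:ℝ) ∈ S := ⟨le_rfl, zero_le_one, by simp⟩
  have hbdd : BddAbove S := ⟨1, fun r hr => hr.2.1⟩
  set R := sSup S with hR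
  have hR0 : 0 ≤ R := le_csSup hbdd h0S
  have hR1 : R ≤ 1 := csSup_le ⟨0, h0S⟩ fun r hr => hr.2.1
  have hRi : Set.InjOn f (ball 0 R) := by
    intro x hx y hy hxy
    rw [mem_ball_zero_iff] at hx hy
    obtain ⟨r, hrS, hr⟩ := exists_lt_of_lt_csSup ⟨0, h0S⟩ (max_lt hx hy)
    exact hrS.2.2 (by simpa using lt_of_le_of_lt (le_max_left _ _) hr)
      (by simpa using lt_of_le_of_lt (le_max_right _ _) hr) hxy
  rcases hR1.lt_or_eq with hlt | heq
  · exfalso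
    have hRc : Set.InjOn f (closedBall 0 R) := by
      rcases hR0.lt_or_eq with hpos | hz
      · exact inj_closed h g hh hg hsp R hpos hlt
          (hconv 0 (by simp) R hpos (by simpa using hlt)) hRi
      · rw [← hz]; simp
    have hsub : closedBall (0:ℂ) R ⊆ ball 0 1 := closedBall_subset_ball hlt
    obtain ⟨t, ht, hti⟩ := hRc.exists_mem_nhdsSet (isCompact_closedBall 0 R)
      (fun x hx => hfc x (hsub hx)) (fun x hx => hloc x (hsub hx))
    obtain ⟨U, hU, hUs, hUt⟩ := mem_nhdsSet_iff_exists.mp ht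
    obtain ⟨δ, hδ, hδs⟩ := (isCompact_closedBall (0:ℂ) R).exists_thickening_subset_open hU hUs
    rw [thickening_closedBall hδ hR0] at hδs
    have hm : min (δ + R) 1 ∈ S := by
      refine ⟨by positivity, min_le_right _ _, hti.mono ?_⟩
      exact ((ball_subset_ball (min_le_left _ _)).trans hδs).trans hUt
    have := le_csSup hbdd hm
    rw [← hR] at this
    have h2 : R < min (δ + R) 1 := lt_min (by linarith) hlt
    linarith
  · rwa [heq] at hRi

lemma K_ineq (h g : ℂ → ℂ)
    (hh : DifferentiableOn ℂ h (ball (0:ℂ) 1))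
    (hg : DifferentiableOn ℂ g (ball (0:ℂ) 1))
    (hsp : ∀ z ∈ ball (0:ℂ) 1, ‖deriv g z‖ < ‖deriv h z‖)
    (hconv : ∀ a ∈ ball (0:ℂ) 1, ∀ r : ℝ, 0 < r → r < 1 - ‖a‖ →
        Convex ℝ ((fun z => h z + conj (g z)) '' ball a r))
    (z ζ : ℂ) (hζ : ζ ≠ 0) (hz : ‖z - ζ‖ + ‖ζ‖ < 1) :
    0 ≤ ‖ζ‖ ^ 2 * ((‖deriv h z‖ ^ 2 - ‖deriv g z‖ ^ 2) +
      (ζ * (deriv (deriv h) z * conj (deriv h z) - deriv (deriv g) z * conj (deriv g z))).re) +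
      (ζ ^ 3 * (deriv (deriv g) z * deriv h z - deriv (deriv h) z * deriv g z)).re := by
  have hinj := inj_all h g hh hg hsp hconv
  have hζp : 0 < ‖ζ‖ := norm_pos_iff.mpr hζ
  have hsub : closedBall (z - ζ) ‖ζ‖ ⊆ ball (0:ℂ) 1 := by
    intro y hy
    rw [mem_closedBall, dist_eq_norm] at hy
    rw [mem_ball_zero_iff]
    have := norm_add_le (y - (z - ζ)) (z - ζ)
    rw [sub_add_cancel] at this
    linarith
  have hzm : z ∈ ball (0:ℂ) 1 := hsub (by simp [dist_eq_norm])
  have ha : z - ζ ∈ ball (0:ℂ) 1 := by rw [mem_ball_zero_iff]; linarith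
  have hw : (fun z => h z + conj (g z)) z ∉ (fun z => h z + conj (g z)) '' ball (z - ζ) ‖ζ‖ := by
    rintro ⟨y, hy, hyz⟩
    have := hinj (hsub (ball_subset_closedBall hy)) hzm hyz
    subst this
    simp [dist_eq_norm] at hy
  obtain ⟨u, hu, hmax⟩ := support_exists h g hh hg hsp (z - ζ) ‖ζ‖ hζp
    (ball_subset_closedBall.trans hsub) (hconv _ ha _ hζp (by linarith)) _ hw
  obtain ⟨μ, hμ, -, hN, h3⟩ := key h g hh hg hsp (z - ζ) ζ hζ hsub u hu
    (by rw [sub_add_cancel]; exact hmax)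
  rw [sub_add_cancel] at hN h3
  have hlt := hsp z hzm
  set H := deriv h z
  set G := deriv g z
  set H' := deriv (deriv h) z
  set G' := deriv (deriv g) z
  have hJ : 0 < ‖H‖ ^ 2 - ‖G‖ ^ 2 := by
    have : 0 ≤ ‖G‖ := norm_nonneg _
    nlinarith
  set c : ℝ := ‖ζ‖ ^ 2 * (‖H‖ ^ 2 - ‖G‖ ^ 2) with hc
  have hcpos : 0 < c := by positivity
  have hcc : conj ζ * ζ * (conj H * H - conj G * G) = (c : ℂ) := by
    rw [Complex.conj_mul', Complex.conj_mul', Complex.conj_mul', hc]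
    push_cast
    ring
  have hN' := hN
  rw [hcc] at hN
  have hNc : conj u * c = μ * (conj ζ * conj H - ζ * G) := by
    have := congrArg (starRingEnd ℂ) hN
    simpa using this
  have hfin : c * (μ + (ζ ^ 2 * (conj u * H' + u * G')).re) = μ * (‖ζ‖ ^ 2 * ((‖H‖ ^ 2 - ‖G‖ ^ 2) +
      (ζ * (H' * conj H - G' * conj G)).re) + (ζ ^ 3 * (G' * H - H' * G)).re) := by
    have e1 : (c : ℂ) * (μ + (ζ ^ 2 * (conj u * H' + u * G'))) =
        μ * (c + ((‖ζ‖ ^ 2 : ℝ) : ℂ) * (ζ * (H' * conj H - G' * conj G))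
          + (ζ ^ 3 * (G' * H - H' * G))) := by
      push_cast
      rw [← Complex.conj_mul']
      rw [map_mul] at hN
      linear_combination (ζ ^ 2 * H') * hNc + (ζ ^ 2 * G') * hN
    have e2 := congrArg Complex.re e1
    rw [Complex.re_ofReal_mul, Complex.re_ofReal_mul, Complex.add_re, Complex.add_re,
      Complex.add_re, Complex.re_ofReal_mul, Complex.ofReal_re, Complex.ofReal_re] at e2
    rw [e2, hc]
    ring
  have h4 : 0 ≤ c * (μ + (ζ ^ 2 * (conj u * H' + u * G')).re) := mul_nonneg hcpos.le h3
  rw [hfin] at h4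
  exact nonneg_of_mul_nonneg_right h4 hμ

lemma dir_ineq (h g : ℂ → ℂ)
    (hh : DifferentiableOn ℂ h (ball (0:ℂ) 1))
    (hg : DifferentiableOn ℂ g (ball (0:ℂ) 1))
    (hsp : ∀ z ∈ ball (0:ℂ) 1, ‖deriv g z‖ < ‖deriv h z‖)
    (hconv : ∀ a ∈ ball (0:ℂ) 1, ∀ r : ℝ, 0 < r → r < 1 - ‖a‖ →
        Convex ℝ ((fun z => h z + conj (g z)) '' ball a r))
    (z e : ℂ) (he : ‖e‖ = 1) (hz : ‖z‖ < 1) :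
    0 ≤ 2 * (1 - (conj z * e).re) * (‖deriv h z‖ ^ 2 - ‖deriv g z‖ ^ 2) + (1 - ‖z‖ ^ 2) *
      ((e * (deriv (deriv h) z * conj (deriv h z) - deriv (deriv g) z * conj (deriv g z))).re +
      (e ^ 3 * (deriv (deriv g) z * deriv h z - deriv (deriv h) z * deriv g z)).re) := by
  have hK := K_ineq h g hh hg hsp hconv z
  have hlt := hsp z (by simpa using hz)
  set J := ‖deriv h z‖ ^ 2 - ‖deriv g z‖ ^ 2
  set P := deriv (deriv h) z * conj (deriv h z) - deriv (deriv g) z * conj (deriv g z)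
  set Q := deriv (deriv g) z * deriv h z - deriv (deriv h) z * deriv g z
  have hJ : 0 < J := by
    have : 0 ≤ ‖deriv g z‖ := norm_nonneg _
    have : J = ‖deriv h z‖ ^ 2 - ‖deriv g z‖ ^ 2 := rfl
    nlinarith
  set X := (e * P).re + (e ^ 3 * Q).re
  have hs0 : 0 ≤ ‖z‖ := norm_nonneg z
  have hRe : (conj z * e).re ≤ ‖z‖ := by
    refine (Complex.re_le_norm _).trans ?_
    rw [norm_mul, RCLike.norm_conj, he, mul_one]
  set D := 2 * (1 - (conj z * e).re) with hD
  have hDpos : 0 < D := by rw [hD]; linarith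
  set m := 1 - ‖z‖ ^ 2 with hm
  have hmpos : 0 < m := by rw [hm]; nlinarith
  have hρ : ∀ ρ : ℝ, 0 < ρ → ρ * D < m → 0 ≤ J + ρ * X := by
    intro ρ hρ0 hρm
    have hρe : ‖(ρ:ℂ) * e‖ = ρ := by
      rw [norm_mul, he, mul_one, Complex.norm_real, Real.norm_of_nonneg hρ0.le]
    have hρ1 : ρ < 1 := by
      have : ρ * (2 * (1 - ‖z‖)) ≤ ρ * D := by
        apply mul_le_mul_of_nonneg_left _ hρ0.le
        rw [hD]; linarith
      have h2 : 2 * ρ * (1 - ‖z‖) < (1 + ‖z‖) * (1 - ‖z‖) := by rw [hm] at hρm; nlinarith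
      have := lt_of_mul_lt_mul_right h2 (by linarith)
      linarith
    have hnorm : ‖z - ρ * e‖ < 1 - ρ := by
      apply lt_of_pow_lt_pow_left₀ 2 (by linarith)
      have hexp : ‖z - ρ * e‖ ^ 2 = ‖z‖ ^ 2 - 2 * ρ * (conj z * e).re + ρ ^ 2 := by
        have he2 : ‖e‖ ^ 2 = 1 := by rw [he]; norm_num
        rw [← Complex.normSq_eq_norm_sq, Complex.normSq_apply] at he2 ⊢
        rw [← Complex.normSq_eq_norm_sq, Complex.normSq_apply]
        simp
        linear_combination ρ ^ 2 * he2
      rw [hexp]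
      rw [hm, hD] at hρm
      nlinarith
    have h1 := hK (ρ * e) (by
      rw [← norm_pos_iff, hρe]; exact hρ0) (by rw [hρe]; linarith)
    rw [hρe] at h1
    have e1 : ((ρ:ℂ) * e * P).re = ρ * (e * P).re := by
      rw [mul_assoc, Complex.re_ofReal_mul]
    have e2 : (((ρ:ℂ) * e) ^ 3 * Q).re = ρ ^ 3 * (e ^ 3 * Q).re := by
      rw [mul_pow, mul_assoc, ← Complex.ofReal_pow, Complex.re_ofReal_mul]
    rw [e1, e2] at h1
    have h2 : 0 ≤ ρ ^ 2 * (J + ρ * X) := by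
      refine h1.trans_eq ?_
      simp only [X]
      ring
    exact nonneg_of_mul_nonneg_right h2 (by positivity)
  by_contra hneg
  push Not at hneg
  set Y := m * X with hY
  have hDJ : 0 < D * J := by positivity
  have hYneg : Y < 0 := by linarith
  have hθ1 : (Y - D * J) / (2 * Y) < 1 := by
    rw [div_lt_one_of_neg (by linarith)]
    linarith
  have hθ0 : 0 < (Y - D * J) / (2 * Y) := div_pos_of_neg_of_neg (by linarith) (by linarith)
  set θ := (Y - D * J) / (2 * Y) with hθ
  have hθY : θ * (2 * Y) = Y - D * J := by
    rw [hθ]; exact div_mul_cancel₀ _ (mul_ne_zero two_ne_zero hYneg.ne)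
  have h1 := hρ (θ * m / D) (by positivity) (by
    rw [div_mul_cancel₀ _ hDpos.ne']; nlinarith)
  have h2 : D * (J + θ * m / D * X) = D * J + θ * Y := by rw [hY]; field_simp
  have h3 : 0 ≤ D * J + θ * Y := by rw [← h2]; positivity
  nlinarith

lemma unit_ineq (h g : ℂ → ℂ)
    (hh : DifferentiableOn ℂ h (ball (0:ℂ) 1))
    (hg : DifferentiableOn ℂ g (ball (0:ℂ) 1))
    (hsp : ∀ z ∈ ball (0:ℂ) 1, ‖deriv g z‖ < ‖deriv h z‖)
    (hconv : ∀ a ∈ ball (0:ℂ) 1, ∀ r : ℝ, 0 < r → r < 1 - ‖a‖ →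
        Convex ℝ ((fun z => h z + conj (g z)) '' ball a r))
    (z e : ℂ) (he : ‖e‖ = 1) (hz : ‖z‖ < 1) :
    0 ≤ 4 / √3 * (‖deriv h z‖ ^ 2 - ‖deriv g z‖ ^ 2) + ((1 - ‖z‖ ^ 2) *
      (e * (deriv (deriv h) z * conj (deriv h z) - deriv (deriv g) z * conj (deriv g z))).re
       - 2 * (conj z * e).re * (‖deriv h z‖ ^ 2 - ‖deriv g z‖ ^ 2)) := by
  have hD := dir_ineq h g hh hg hsp hconv z
  set J := ‖deriv h z‖ ^ 2 - ‖deriv g z‖ ^ 2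
  set P := deriv (deriv h) z * conj (deriv h z) - deriv (deriv g) z * conj (deriv g z)
  set Q := deriv (deriv g) z * deriv h z - deriv (deriv h) z * deriv g z
  have h3 : √3 ^ 2 = 3 := Real.sq_sqrt (by norm_num)
  have hpos : 0 < √3 := by positivity
  set c₁ : ℂ := ⟨√3 / 2, 1 / 2⟩ with hc₁
  set c₂ : ℂ := ⟨√3 / 2, -(1 / 2)⟩ with hc₂
  have hn1 : ‖c₁‖ = 1 := by
    rw [← sq_eq_sq₀ (norm_nonneg _) zero_le_one, ← Complex.normSq_eq_norm_sq, Complex.normSq_apply]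
    simp only [hc₁]; nlinarith
  have hn2 : ‖c₂‖ = 1 := by
    rw [← sq_eq_sq₀ (norm_nonneg _) zero_le_one, ← Complex.normSq_eq_norm_sq, Complex.normSq_apply]
    simp only [hc₂]; nlinarith
  have hcub1 : c₁ ^ 3 = I := by
    apply Complex.ext
    · simp [pow_succ, hc₁]; linear_combination (√3 / 8) * h3
    · simp [pow_succ, hc₁]; linear_combination (3 / 8) * h3
  have hcub2 : c₂ ^ 3 = -I := by
    apply Complex.ext
    · simp [pow_succ, hc₂]; linear_combination (√3 / 8) * h3
    · simp [pow_succ, hc₂]; linear_combination (-3 / 8) * h3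
  have hsum : c₁ + c₂ = ((√3 : ℝ) : ℂ) := by
    apply Complex.ext <;> simp [hc₁, hc₂]
  have d1 := hD (e * c₁) (by rw [norm_mul, he, hn1, one_mul]) hz
  have d2 := hD (e * c₂) (by rw [norm_mul, he, hn2, one_mul]) hz
  have e1 : (e * c₁ * P).re + (e * c₂ * P).re = √3 * (e * P).re := by
    rw [← Complex.add_re, ← Complex.re_ofReal_mul, ← hsum]; congr 1; ring
  have e2 : (conj z * (e * c₁)).re + (conj z * (e * c₂)).re = √3 * (conj z * e).re := by
    rw [← Complex.add_re, ← Complex.re_ofReal_mul, ← hsum]; congr 1; ring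
  have e3 : ((e * c₁) ^ 3 * Q).re + ((e * c₂) ^ 3 * Q).re = 0 := by
    rw [mul_pow, mul_pow, hcub1, hcub2, ← Complex.add_re]
    have : e ^ 3 * I * Q + e ^ 3 * -I * Q = 0 := by ring
    rw [this]; simp
  have hsumd : 0 ≤ √3 * (4 / √3 * J + ((1 - ‖z‖ ^ 2) * (e * P).re - 2 * (conj z * e).re * J)) := by
    have e4 : √3 * (4 / √3) = 4 := by field_simp
    refine (add_nonneg d1 d2).trans_eq ?_
    linear_combination (1 - ‖z‖ ^ 2) * e1 - 2 * J * e2 + (1 - ‖z‖ ^ 2) * e3 - J * e4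
  exact nonneg_of_mul_nonneg_right hsumd hpos

lemma ray_deriv (h g : ℂ → ℂ)
    (hh : DifferentiableOn ℂ h (ball (0:ℂ) 1))
    (hg : DifferentiableOn ℂ g (ball (0:ℂ) 1))
    (e : ℂ) (he : ‖e‖ = 1) (s : ℝ) (hs : |s| < 1) :
    HasDerivAt (fun s : ℝ => ‖deriv h (s * e)‖ ^ 2 - ‖deriv g (s * e)‖ ^ 2)
      (2 * (e * (deriv (deriv h) (s * e) * conj (deriv h (s * e))
        - deriv (deriv g) (s * e) * conj (deriv g (s * e)))).re) s := by
  have hm : (s:ℂ) * e ∈ ball (0:ℂ) 1 := by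
    rw [mem_ball_zero_iff, norm_mul, he, mul_one, Complex.norm_real]; exact hs
  have hl : HasDerivAt (fun s : ℝ => (s:ℂ) * e) e s := by
    simpa using (Complex.ofRealCLM.hasDerivAt (x := s)).mul_const e
  have h1 := ((hh.deriv isOpen_ball).differentiableAt (isOpen_ball.mem_nhds hm)).hasDerivAt
  have h2 := ((hg.deriv isOpen_ball).differentiableAt (isOpen_ball.mem_nhds hm)).hasDerivAt
  have h3 := (h1.scomp s hl).norm_sq
  have h4 := (h2.scomp s hl).norm_sq
  refine (h3.sub h4).congr_deriv ?_
  simp [Complex.inner]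
  ring

/-- the extremal radial density -/
def Mq (q s : ℝ) : ℝ := (1 + s) ^ (q - 2) * (1 - s) ^ (-q - 2)

def Fq (q s : ℝ) : ℝ := 3 - (3 * s ^ 2 - 6 * q * s + 3) * ((1 + s) ^ (q - 1) * (1 - s) ^ (-q - 1))

lemma deriv_pq (a b s : ℝ) (h1 : -1 < s) (h2 : s < 1) :
    HasDerivAt (fun s : ℝ => (1 + s) ^ a * (1 - s) ^ b)
      ((1 + s) ^ (a - 1) * (1 - s) ^ (b - 1) * (a * (1 - s) - b * (1 + s))) s := by
  have p1 : 0 < 1 + s := by linarith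
  have p2 : 0 < 1 - s := by linarith
  have d1 := ((hasDerivAt_id s).const_add 1).rpow_const (p := a) (Or.inl p1.ne')
  have d2 := ((hasDerivAt_id s).const_sub 1).rpow_const (p := b) (Or.inl p2.ne')
  refine (d1.mul d2).congr_deriv ?_
  have e1 : (1 + s) ^ a = (1 + s) ^ (a - 1) * (1 + s) := by
    rw [Real.rpow_sub_one p1.ne']; field_simp
  have e2 : (1 - s) ^ b = (1 - s) ^ (b - 1) * (1 - s) := by
    rw [Real.rpow_sub_one p2.ne']; field_simp
  simp only [id]
  rw [e1, e2]
  ring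

lemma Fq_deriv (q : ℝ) (hq : q ^ 2 = 16 / 3) (s : ℝ) (h1 : -1 < s) (h2 : s < 1) :
    HasDerivAt (Fq q) (52 * (s * Mq q s)) s := by
  have d := deriv_pq (q - 1) (-q - 1) s h1 h2
  have d3 : HasDerivAt (fun s : ℝ => 3 * s ^ 2 - 6 * q * s + 3) (6 * s - 6 * q) s := by
    have := (((hasDerivAt_id s).pow 2).const_mul 3).sub ((hasDerivAt_id s).const_mul (6 * q))
    refine (this.add_const 3).congr_deriv ?_
    simp; ring
  refine ((d3.mul d).const_sub 3).congr_deriv ?_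
  have p1 : 0 < 1 + s := by linarith
  have p2 : 0 < 1 - s := by linarith
  have e1 : (1 + s) ^ (q - 1) = (1 + s) ^ (q - 2) * (1 + s) := by
    rw [← Real.rpow_add_one p1.ne']; congr 1; ring
  have e2 : (1 - s) ^ (-q - 1) = (1 - s) ^ (-q - 2) * (1 - s) := by
    rw [← Real.rpow_add_one p2.ne']; congr 1; ring
  rw [show q - 1 - 1 = q - 2 by ring, show -q - 1 - 1 = -q - 2 by ring, e1, e2, Mq]
  linear_combination (12 * s * (1 + s) ^ (q - 2) * (1 - s) ^ (-q - 2)) * hq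

lemma ratio_deriv (φ : ℝ → ℝ) (φ' q s : ℝ) (h1 : -1 < s) (h2 : s < 1) (hφ : HasDerivAt φ φ' s) :
    HasDerivAt (fun s => φ s * ((1 + s) ^ (2 - q) * (1 - s) ^ (q + 2)))
      ((1 + s) ^ (1 - q) * (1 - s) ^ (q + 1) * (φ' * (1 - s ^ 2) - (4 * s + 2 * q) * φ s)) s := by
  have d := deriv_pq (2 - q) (q + 2) s h1 h2
  refine (hφ.mul d).congr_deriv ?_
  have p1 : 0 < 1 + s := by linarith
  have p2 : 0 < 1 - s := by linarith
  have e1 : (1 + s) ^ (2 - q) = (1 + s) ^ (1 - q) * (1 + s) := by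
    rw [show 1 - q = 2 - q - 1 by ring, Real.rpow_sub_one p1.ne']; field_simp
  have e2 : (1 - s) ^ (q + 2) = (1 - s) ^ (q + 1) * (1 - s) := by
    rw [show q + 1 = q + 2 - 1 by ring, Real.rpow_sub_one p2.ne']; field_simp
  rw [show 2 - q - 1 = 1 - q by ring, show q + 2 - 1 = q + 1 by ring, e1, e2]
  ring

lemma ratio_val (x q s : ℝ) (h1 : -1 < s) (h2 : s < 1) :
    x * ((1 + s) ^ (2 - q) * (1 - s) ^ (q + 2)) * Mq q s = x := by
  have p1 : 0 < 1 + s := by linarith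
  have p2 : 0 < 1 - s := by linarith
  have e1 : (1 + s) ^ (2 - q) * (1 + s) ^ (q - 2) = 1 := by
    rw [← Real.rpow_add p1]; simp
  have e2 : (1 - s) ^ (q + 2) * (1 - s) ^ (-q - 2) = 1 := by
    rw [← Real.rpow_add p2, show q + 2 + (-q - 2) = 0 by ring, Real.rpow_zero]
  rw [Mq]
  linear_combination x * ((1 - s) ^ (q + 2) * (1 - s) ^ (-q - 2)) * e1 + x * e2

lemma Mq_pos (q s : ℝ) (h1 : -1 < s) (h2 : s < 1) : 0 < Mq q s := by
  have p1 : 0 < 1 + s := by linarith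
  have p2 : 0 < 1 - s := by linarith
  exact mul_pos (Real.rpow_pos_of_pos p1 _) (Real.rpow_pos_of_pos p2 _)

lemma ode_upper (φ φ' : ℝ → ℝ) (q : ℝ) (hφ : ∀ s, |s| < 1 → HasDerivAt φ (φ' s) s)
    (hle : ∀ s, 0 ≤ s → s < 1 → φ' s * (1 - s ^ 2) ≤ (4 * s + 2 * q) * φ s) (s : ℝ) (hs : 0 ≤ s)
    (hs1 : s < 1) : φ s ≤ φ 0 * Mq q s := by
  have hd : ∀ t ∈ Set.Icc 0 s, HasDerivAt (fun s => φ s * ((1 + s) ^ (2 - q) * (1 - s) ^ (q + 2)))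
      ((1 + t) ^ (1 - q) * (1 - t) ^ (q + 1) * (φ' t * (1 - t ^ 2) - (4 * t + 2 * q) * φ t)) t :=
    fun t ht => ratio_deriv φ (φ' t) q t (by linarith [ht.1]) (by linarith [ht.2])
      (hφ t (abs_lt.mpr ⟨by linarith [ht.1], by linarith [ht.2]⟩))
  have hanti : AntitoneOn (fun s => φ s * ((1 + s) ^ (2 - q) * (1 - s) ^ (q + 2)))
      (Set.Icc 0 s) := by
    apply antitoneOn_of_deriv_nonpos (convex_Icc 0 s)
    · exact fun t ht => (hd t ht).continuousAt.continuousWithinAt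
    · exact fun t ht => (hd t (interior_subset ht)).differentiableAt.differentiableWithinAt
    · intro t ht
      have ht := interior_subset ht
      rw [(hd t ht).deriv]
      have p1 : 0 < 1 + t := by linarith [ht.1]
      have p2 : 0 < 1 - t := by linarith [ht.2]
      apply mul_nonpos_of_nonneg_of_nonpos
      · exact (mul_pos (Real.rpow_pos_of_pos p1 _) (Real.rpow_pos_of_pos p2 _)).le
      · linarith [hle t ht.1 (by linarith [ht.2])]
  have := hanti (Set.left_mem_Icc.mpr hs) (Set.right_mem_Icc.mpr hs) hs
  simp only [add_zero, sub_zero, Real.one_rpow, mul_one] at this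
  have h2 := mul_le_mul_of_nonneg_right this (Mq_pos q s (by linarith) hs1).le
  rwa [ratio_val _ _ _ (by linarith) hs1] at h2

lemma ode_lower (φ φ' : ℝ → ℝ) (q : ℝ) (hφ : ∀ s, |s| < 1 → HasDerivAt φ (φ' s) s)
    (hle : ∀ s, 0 ≤ s → s < 1 → (4 * s + 2 * q) * φ s ≤ φ' s * (1 - s ^ 2)) (s : ℝ) (hs : 0 ≤ s)
    (hs1 : s < 1) : φ 0 * Mq q s ≤ φ s := by
  have := ode_upper (fun s => - φ s) (fun s => - φ' s) q (fun s h => (hφ s h).neg)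
    (fun s h1 h2 => by linarith [hle s h1 h2]) s hs hs1
  linarith

lemma Mq_cont (q r : ℝ) (hr1 : r < 1) : ContinuousOn (Mq q) (Set.Icc 0 r) := by
  unfold Mq
  intro s hs
  exact (deriv_pq (q - 2) (-q - 2) s (by linarith [hs.1])
    (by linarith [hs.2])).continuousAt.continuousWithinAt

lemma Mq_integrable (q r : ℝ) (hr1 : r < 1) :
    IntegrableOn (fun z : ℂ => Mq q ‖z‖) (ball (0:ℂ) r) := by
  have : ContinuousOn (fun z : ℂ => Mq q ‖z‖) (closedBall (0:ℂ) r) :=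
    (Mq_cont q r hr1).comp continuous_norm.continuousOn
      (fun z hz => ⟨norm_nonneg z, by simpa using hz⟩)
  exact (this.integrableOn_compact (isCompact_closedBall 0 r)).mono_set ball_subset_closedBall

lemma Mq_integral (q r : ℝ) (hq : q ^ 2 = 16 / 3) (hr0 : 0 < r) (hr1 : r < 1) :
    ∫ z in ball (0:ℂ) r, Mq q ‖z‖ = π / 26 * Fq q r := by
  have h1 : ∫ z in ball (0:ℂ) r, Mq q ‖z‖ =
      ∫ z : ℂ, (Set.Iio r).indicator (Mq q) ‖z‖ := by
    rw [← integral_indicator measurableSet_ball]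
    congr 1
    ext z
    simp [Set.indicator]
  rw [h1, integral_fun_norm_addHaar volume ((Set.Iio r).indicator (Mq q))]
  have hvol : (volume : Measure ℂ).real (ball 0 1) = π := by
    rw [Measure.real, Complex.volume_ball]
    simp
  have hintg : ∫ y in Set.Ioi (0:ℝ), y ^ (Module.finrank ℝ ℂ - 1) • (Set.Iio r).indicator (Mq q) y
      = Fq q r / 52 := by
    have e1 : ∀ y : ℝ, y ^ (Module.finrank ℝ ℂ - 1) • (Set.Iio r).indicator (Mq q) y =
        (Set.Iio r).indicator (fun y => y * Mq q y) y := by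
      intro y
      simp [Complex.finrank_real_complex, Set.indicator]
    simp_rw [e1]
    rw [setIntegral_indicator measurableSet_Iio, Set.Ioi_inter_Iio, ← integral_Ioc_eq_integral_Ioo,
      ← intervalIntegral.integral_of_le hr0.le]
    have hFTC := intervalIntegral.integral_eq_sub_of_hasDerivAt (a := 0) (b := r)
      (f := fun s => Fq q s / 52) (f' := fun s => s * Mq q s) ?_ ?_
    · rw [hFTC]
      simp [Fq]
    · intro s hs
      rw [Set.uIcc_of_le hr0.le] at hs
      refine ((Fq_deriv q hq s (by linarith [hs.1]) (by linarith [hs.2])).div_const 52).congr_deriv ?_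
      ring
    · apply ContinuousOn.intervalIntegrable
      rw [Set.uIcc_of_le hr0.le]
      exact continuousOn_id.mul (Mq_cont q r hr1)
  rw [hintg, hvol, Complex.finrank_real_complex]
  simp
  ring

lemma pointwise_bounds (h g : ℂ → ℂ)
    (hh : DifferentiableOn ℂ h (ball (0:ℂ) 1))
    (hg : DifferentiableOn ℂ g (ball (0:ℂ) 1))
    (hsp : ∀ z ∈ ball (0:ℂ) 1, ‖deriv g z‖ < ‖deriv h z‖) (hd1 : deriv h 0 = 1)
    (hconv : ∀ a ∈ ball (0:ℂ) 1, ∀ r : ℝ, 0 < r → r < 1 - ‖a‖ →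
        Convex ℝ ((fun z => h z + conj (g z)) '' ball a r))
    (z : ℂ) (hz : ‖z‖ < 1) :
    (1 - ‖deriv g 0‖ ^ 2) * Mq (-(4 / √3)) ‖z‖ ≤ ‖deriv h z‖ ^ 2 - ‖deriv g z‖ ^ 2 ∧
    ‖deriv h z‖ ^ 2 - ‖deriv g z‖ ^ 2 ≤ (1 - ‖deriv g 0‖ ^ 2) * Mq (4 / √3) ‖z‖ := by
  obtain ⟨e, he, hze⟩ : ∃ e : ℂ, ‖e‖ = 1 ∧ (‖z‖ : ℂ) * e = z := by
    by_cases h0 : z = 0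
    · exact ⟨1, by simp, by simp [h0]⟩
    · have : (‖z‖ : ℂ) ≠ 0 := by exact_mod_cast norm_ne_zero_iff.mpr h0
      exact ⟨z / ‖z‖, by simp [h0], by field_simp⟩
  have hφ := ray_deriv h g hh hg e he
  have hn : ∀ s : ℝ, 0 ≤ s → ‖(s:ℂ) * e‖ = s := by
    intro s hs
    rw [norm_mul, he, mul_one, Complex.norm_real, Real.norm_of_nonneg hs]
  have hre : ∀ s : ℝ, (conj ((s:ℂ) * e) * e).re = s := by
    intro s
    rw [map_mul, Complex.conj_ofReal, mul_assoc, Complex.conj_mul', he]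
    simp
  constructor
  · have := ode_lower _ _ (-(4 / √3)) hφ ?_ ‖z‖ (norm_nonneg z) hz
    · simpa [hze, hd1] using this
    · intro s h1 h2
      have := unit_ineq h g hh hg hsp hconv (s * e) e he (by rw [hn s h1]; exact h2)
      rw [hn s h1, hre] at this
      linarith
  · have := ode_upper _ _ (4 / √3) hφ ?_ ‖z‖ (norm_nonneg z) hz
    · simpa [hze, hd1] using this
    · intro s h1 h2
      have := unit_ineq h g hh hg hsp hconv (s * e) (-e) (by simpa using he)
        (by rw [hn s h1]; exact h2)
      rw [hn s h1, mul_neg, Complex.neg_re, hre, neg_mul, Complex.neg_re] at this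
      linarith

/-- Area bounds: for `f = h + conj g ∈ 𝒜𝒦_H` with `b₁ = g'(0)` and
`0 < r < 1`, the area `A(f(𝔻_r)) = ∬_{𝔻_r} J_f` (with `J_f = |h'|² - |g'|²`) satisfies
the stated lower and upper bounds. -/
theorem AK_area_bounds (h g : ℂ → ℂ)
    (hh : DifferentiableOn ℂ h (ball (0:ℂ) 1))
    (hg : DifferentiableOn ℂ g (ball (0:ℂ) 1))
    (hsp : ∀ z ∈ ball (0:ℂ) 1, ‖deriv g z‖ < ‖deriv h z‖)
    (h0 : h 0 = 0) (g0 : g 0 = 0) (hd1 : deriv h 0 = 1) (hb1 : ‖deriv g 0‖ < 1)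
    (hconv : ∀ a ∈ ball (0:ℂ) 1, ∀ r : ℝ, 0 < r → r < 1 - ‖a‖ →
        Convex ℝ ((fun z => h z + conj (g z)) '' ball a r))
    (r : ℝ) (hr0 : 0 < r) (hr1 : r < 1) :
    π * (1 - ‖deriv g 0‖ ^ 2) / 26 *
        (3 - (3 * r ^ 2 + 8 * Real.sqrt 3 * r + 3)
          * (1 - r) ^ (4 / Real.sqrt 3 - 1) / (1 + r) ^ (4 / Real.sqrt 3 + 1))
      ≤ (∫ z in ball (0:ℂ) r, (‖deriv h z‖ ^ 2 - ‖deriv g z‖ ^ 2)) ∧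
    (∫ z in ball (0:ℂ) r, (‖deriv h z‖ ^ 2 - ‖deriv g z‖ ^ 2))
      ≤ π * (1 - ‖deriv g 0‖ ^ 2) / 26 *
        (3 - (3 * r ^ 2 - 8 * Real.sqrt 3 * r + 3)
          * (1 + r) ^ (4 / Real.sqrt 3 - 1) / (1 - r) ^ (4 / Real.sqrt 3 + 1)) := by
  
  have hsub : closedBall (0:ℂ) r ⊆ ball 0 1 := closedBall_subset_ball hr1
  have hJc : ContinuousOn (fun z => ‖deriv h z‖ ^ 2 - ‖deriv g z‖ ^ 2) (closedBall (0:ℂ) r) :=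
    ((((hh.deriv isOpen_ball).continuousOn.mono hsub).norm.pow 2).sub
      (((hg.deriv isOpen_ball).continuousOn.mono hsub).norm.pow 2))
  have hJi : IntegrableOn (fun z => ‖deriv h z‖ ^ 2 - ‖deriv g z‖ ^ 2) (ball (0:ℂ) r) :=
    (hJc.integrableOn_compact (isCompact_closedBall 0 r)).mono_set ball_subset_closedBall
  have hpt := pointwise_bounds h g hh hg hsp hd1 hconv
  have hlt : ∀ z ∈ ball (0:ℂ) r, ‖z‖ < 1 := fun z hz =>
    lt_trans (mem_ball_zero_iff.mp hz) hr1
  have h3 : √3 ^ 2 = 3 := Real.sq_sqrt (by norm_num)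
  have hpos : 0 < √3 := by positivity
  have hp2 : (4 / √3) ^ 2 = 16 / 3 := by rw [div_pow, h3]; norm_num
  have h6 : 6 * (4 / √3) = 8 * √3 := by field_simp; linarith
  have p1 : 0 ≤ 1 + r := by linarith
  have p2 : 0 ≤ 1 - r := by linarith
  constructor
  · have h1 := setIntegral_mono_on ((Mq_integrable (-(4 / √3)) r hr1).const_mul
      (1 - ‖deriv g 0‖ ^ 2)) hJi measurableSet_ball (fun z hz => (hpt z (hlt z hz)).1)
    rw [integral_const_mul, Mq_integral _ r (by rw [neg_sq]; exact hp2) hr0 hr1] at h1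
    refine le_of_eq_of_le ?_ h1
    rw [Fq, show -(4 / √3) - 1 = -(4 / √3 + 1) by ring, show - -(4 / √3) - 1 = 4 / √3 - 1 by ring,
      Real.rpow_neg p1, ← h6]
    ring
  · have h1 := setIntegral_mono_on hJi ((Mq_integrable (4 / √3) r hr1).const_mul
      (1 - ‖deriv g 0‖ ^ 2)) measurableSet_ball (fun z hz => (hpt z (hlt z hz)).2)
    rw [integral_const_mul, Mq_integral _ r hp2 hr0 hr1] at h1
    refine le_of_le_of_eq h1 ?_
    rw [Fq, show -(4 / √3) - 1 = -(4 / √3 + 1) by ring, Real.rpow_neg p2, ← h6]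
    ring
end
end
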